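/- arXiv:1712.07371 — 3 statements merged into one kernel-verified Lean document; each statement's English description precedes it below -/
import Mathlib

section
/- Let f : ℝ → ℝ be a 2π-periodic, even, measurable function with 0 < m ≤ f(λ) ≤ M for all λ, and let f_n : ℝ → ℝ (n ∈ ℕ) be 2π-periodic, even, measurable functions with C₁ ≤ f_n(λ) ≤ C₂ for all λ and n, where 0 < C₁ < C₂ < ∞, such that sup_{λ∈[−π,π]} |f_n(λ) − f(λ)| → 0 as n → ∞. Let a_k := a_k(log f) and â_{k,n} := a_k(log f_n) (these are real since f and f_n are even), and let (c_k) and (ĉ_{k,n}) be obtained from (a_k)_{k≥1} and (â_{k,n})_{k≥1} by the MA recursion. Then Σ_{k=0}^∞ (ĉ_{k,n} − c_k)² → 0 as n → ∞. -/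
open MeasureTheory Filter Topology

/-- For an even 2π-periodic integrable `g : ℝ → ℝ` its `k`-th Fourier coefficient is real
and equals the cosine coefficient `a_k(g) = (1/(2π)) ∫_{-π}^{π} g(λ) cos(kλ) dλ`. -/
noncomputable def cosFourierCoef (g : ℝ → ℝ) (k : ℕ) : ℝ :=
  (1 / (2 * Real.pi)) * ∫ x in (-Real.pi)..Real.pi, g x * Real.cos (k * x)

/-- The (real) MA recursion: `c 0 = 1` and
`c (k+1) = ∑_{j=0}^{k} (1 - j/(k+1)) * a (k+1-j) * c j`. -/
def IsMARecR (a c : ℕ → ℝ) : Prop :=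
  c 0 = 1 ∧
    ∀ k : ℕ, c (k + 1) =
      ∑ j ∈ Finset.range (k + 1), (1 - (j : ℝ) / ((k : ℝ) + 1)) * a (k + 1 - j) * c j


open Metric in
theorem MA_series (a : ℕ → ℝ) (B : ℝ) (hB : ∀ k, |a k| ≤ B) :
    DifferentiableOn ℂ (fun z : ℂ => ∑' k, (a k : ℂ) * z ^ k) (ball 0 1) ∧
    ∀ k, iteratedDeriv k (fun z : ℂ => ∑' k, (a k : ℂ) * z ^ k) 0 = k.factorial * a k := by
  set p := FormalMultilinearSeries.ofScalars ℂ (fun k => (a k : ℂ)) with hp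
  have hsum : p.sum = (fun z : ℂ => ∑' k, (a k : ℂ) * z ^ k) := by
    have := FormalMultilinearSeries.ofScalarsSum_eq_tsum (E := ℂ) (fun k => (a k : ℂ))
    simpa [FormalMultilinearSeries.ofScalarsSum] using this
  have hr : (1 : ENNReal) ≤ p.radius := by
    have := p.le_radius_of_bound (r := 1) B (fun n => by
      simpa [hp, FormalMultilinearSeries.ofScalars_norm] using hB n)
    simpa using this
  have hps := p.hasFPowerSeriesOnBall (lt_of_lt_of_le one_pos hr)
  rw [hsum] at hps
  constructor
  · have := (hps.mono one_pos hr).differentiableOn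
    intro z hz
    have hz' : z ∈ eball (0 : ℂ) 1 := by
      simpa [mem_eball, edist_zero_right, ← ofReal_norm] using hz
    exact (this.differentiableAt (isOpen_eball.mem_nhds hz')).differentiableWithinAt
  · intro k
    have h1 := hps.analyticAt.hasFPowerSeriesAt.eq_formalMultilinearSeries hps.hasFPowerSeriesAt
    have h2 := congrArg (fun q => FormalMultilinearSeries.coeff q k) h1
    simp only [hp, FormalMultilinearSeries.coeff_ofScalars] at h2
    rw [div_eq_iff (by exact_mod_cast k.factorial_ne_zero)] at h2
    rw [h2, mul_comm]

open Metric in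
theorem MA_coeff (a c : ℕ → ℝ) (B : ℝ) (hB : ∀ k, |a k| ≤ B) (h : IsMARecR a c) (k : ℕ) :
    iteratedDeriv k (fun z : ℂ => Complex.exp ((∑' k, (a k : ℂ) * z ^ k) - a 0)) 0
      = k.factorial * c k := by
  obtain ⟨hd, hi⟩ := MA_series a B hB
  set S := (fun z : ℂ => ∑' k, (a k : ℂ) * z ^ k) with hS
  set F := (fun z : ℂ => Complex.exp (S z - a 0)) with hF
  have hnhds : ball (0 : ℂ) 1 ∈ 𝓝 (0 : ℂ) := ball_mem_nhds _ one_pos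
  have hSa : AnalyticAt ℂ S 0 := hd.analyticAt hnhds
  have hFa : AnalyticAt ℂ F 0 := (hSa.sub analyticAt_const).cexp
  have hder : deriv F =ᶠ[𝓝 0] F * deriv S := by
    filter_upwards [hnhds] with z hz
    have h1 : HasDerivAt S (deriv S z) z :=
      (hd.differentiableAt (isOpen_ball.mem_nhds hz)).hasDerivAt
    exact ((h1.sub_const _).cexp).deriv
  induction k using Nat.strong_induction_on with
  | _ k ih =>
    cases k with
    | zero =>
      have := hi 0
      simp at this
      simp [hF, this, h.1]
    | succ k =>
      rw [iteratedDeriv_succ', hder.iteratedDeriv_eq, iteratedDeriv_mul hFa.contDiffAt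
        hSa.deriv.contDiffAt, h.2]
      push_cast
      rw [Finset.mul_sum]
      apply Finset.sum_congr rfl
      intro j hj
      have hj' : j ≤ k := by simpa [Nat.lt_succ_iff] using hj
      rw [ih j (by omega), ← iteratedDeriv_succ', hi]
      obtain ⟨l, rfl⟩ := Nat.exists_eq_add_of_le hj'
      have e1 : j + l - j = l := by omega
      have e2 : j + l + 1 - j = l + 1 := by omega
      rw [e1, e2]
      have h3 : ((j + l).choose j : ℂ) * j.factorial * l.factorial = (j + l).factorial := by
        have := Nat.add_choose_mul_factorial_mul_factorial j l
        rw [← Nat.choose_symm_add] at this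
        exact_mod_cast this
      have h4 : ((j : ℂ) + l + 1) ≠ 0 := by exact_mod_cast (by omega : j + l + 1 ≠ 0)
      rw [Nat.factorial_succ l, Nat.factorial_succ (j+l)]
      push_cast
      rw [← h3]
      field_simp
      ring

open Metric in
theorem MA_bessel (G : ℂ → ℂ) (hG : DifferentiableOn ℂ G (ball 0 1)) (r : ℝ) (hr : 0 < r)
    (hr1 : r < 1) (N : ℕ) :
    ∑ k ∈ Finset.range N, ‖iteratedDeriv k G 0 / k.factorial * r ^ k‖ ^ 2 ≤
      Real.circleAverage (fun z => ‖G z‖ ^ 2) 0 r := by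
  have hcont : Continuous fun θ : ℝ => G (circleMap 0 r θ) := by
    apply hG.continuousOn.comp_continuous (continuous_circleMap 0 r)
    intro θ
    simp [abs_of_pos hr, hr1]
  have hpi : (0 : ℝ) < 2 * Real.pi := by positivity
  have hdc : DiffContOnCl ℂ G (ball 0 r) :=
    (hG.mono (by rw [closure_ball _ hr.ne']; exact closedBall_subset_ball hr1)).diffContOnCl
  have hL2 : MemLp (fun θ : ℝ => G (circleMap 0 r θ)) 2
      (volume.restrict (Set.Ioc 0 (2 * Real.pi))) := by
    obtain ⟨C, hC⟩ := (isCompact_Icc (a := (0:ℝ)) (b := 2 * Real.pi)).exists_bound_of_continuousOn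
      hcont.continuousOn
    refine MemLp.of_bound hcont.aestronglyMeasurable C ?_
    filter_upwards [ae_restrict_mem measurableSet_Ioc] with x hx
    exact hC x (Set.Ioc_subset_Icc_self hx)
  have hs := hasSum_sq_fourierCoeffOn hpi hL2
  have hco : ∀ k : ℕ, fourierCoeffOn hpi (fun θ : ℝ => G (circleMap 0 r θ)) (k : ℤ)
      = iteratedDeriv k G 0 / k.factorial * r ^ k := by
    intro k
    have hc := hdc.circleIntegral_one_div_sub_center_pow_smul hr k
    rw [fourierCoeffOn_eq_integral]
    rw [circleIntegral] at hc
    have : ∀ θ : ℝ, deriv (circleMap 0 r) θ • (1 / (circleMap 0 r θ - 0) ^ (k + 1)) •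
        G (circleMap 0 r θ) = (Complex.I / r ^ k) *
        (fourier (-(k : ℤ)) (θ : AddCircle (2 * Real.pi - 0)) • G (circleMap 0 r θ)) := by
      intro θ
      rw [fourier_coe_apply]
      have hr' : (r : ℂ) ≠ 0 := by exact_mod_cast hr.ne'
      have hexp := Complex.exp_ne_zero (θ * Complex.I)
      have : Complex.exp (2 * Real.pi * Complex.I * ((-(k : ℤ) : ℤ) : ℂ) * θ /
          ((2 * Real.pi - 0 : ℝ) : ℂ)) = (Complex.exp (θ * Complex.I) ^ k)⁻¹ := by
        rw [← Complex.exp_nat_mul, ← Complex.exp_neg]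
        congr 1
        have : (Real.pi : ℂ) ≠ 0 := by exact_mod_cast Real.pi_ne_zero
        push_cast
        field_simp
        ring
      rw [this]
      simp only [deriv_circleMap, circleMap, smul_eq_mul, zero_add, sub_zero]
      field_simp
      ring
    simp_rw [this] at hc
    rw [intervalIntegral.integral_const_mul] at hc
    have hr' : (r : ℂ) ≠ 0 := by exact_mod_cast hr.ne'
    have hpi' : (Real.pi : ℂ) ≠ 0 := by exact_mod_cast Real.pi_ne_zero
    have hk : (k.factorial : ℂ) ≠ 0 := by exact_mod_cast k.factorial_ne_zero
    set J := ∫ θ in (0:ℝ)..(2 * Real.pi),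
        (fourier (-(k : ℤ)) (θ : AddCircle (2 * Real.pi - 0)) • G (circleMap 0 r θ))
    rw [smul_eq_mul] at hc
    have hI := Complex.I_ne_zero
    have hJ : J = 2 * Real.pi / k.factorial * iteratedDeriv k G 0 * r ^ k := by
      field_simp at hc ⊢
      linear_combination hc
    rw [hJ, Complex.real_smul]
    push_cast
    field_simp
    ring
  rw [Real.circleAverage_def]
  rw [sub_zero] at hs
  refine le_trans ?_ (sum_le_hasSum ((Finset.range N).map ⟨((↑) : ℕ → ℤ), Nat.cast_injective⟩)
    (fun i _ => by positivity) hs)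
  rw [Finset.sum_map]
  simp only [Function.Embedding.coeFn_mk, hco]
  rfl

theorem MA_half (w : ℂ) (hw : ‖w‖ < 1) : 1 / 2 ≤ ((1 - w)⁻¹).re := by
  have h1 : w.re * w.re + w.im * w.im < 1 := by
    rw [← Complex.normSq_apply, Complex.normSq_eq_norm_sq]
    nlinarith [norm_nonneg w]
  have h2 : 0 < (1 - w.re) * (1 - w.re) + w.im * w.im := by
    have : w.re < 1 := lt_of_le_of_lt (Complex.re_le_norm w) hw
    nlinarith [mul_pos (sub_pos.2 this) (sub_pos.2 this), mul_self_nonneg w.im]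
  rw [Complex.inv_re, Complex.normSq_apply]
  simp only [Complex.sub_re, Complex.one_re, Complex.sub_im, Complex.one_im, zero_sub, neg_mul_neg]
  rw [div_le_div_iff₀ (by norm_num) h2]
  nlinarith

theorem MA_kernel (z : ℂ) (hz : ‖z‖ < 1) (x : ℝ) :
    1 / 2 ≤ (∑' k : ℕ, (Real.cos (k * x) : ℂ) * z ^ k).re := by
  have n1 : ‖z * Complex.exp (x * Complex.I)‖ < 1 := by simpa [Complex.norm_exp_ofReal_mul_I]
  have n2 : ‖z * Complex.exp (-x * Complex.I)‖ < 1 := by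
    have := Complex.norm_exp_ofReal_mul_I (-x)
    push_cast at this
    rw [norm_mul, this, mul_one]
    exact hz
  have h := ((hasSum_geometric_of_norm_lt_one n1).add
    (hasSum_geometric_of_norm_lt_one n2)).mul_left (1 / 2 : ℂ)
  have : (fun k : ℕ => (Real.cos (k * x) : ℂ) * z ^ k) = fun k : ℕ => (1 / 2 : ℂ) *
      ((z * Complex.exp (x * Complex.I)) ^ k + (z * Complex.exp (-x * Complex.I)) ^ k) := by
    funext k
    rw [mul_pow, mul_pow, ← Complex.exp_nat_mul, ← Complex.exp_nat_mul, Complex.ofReal_cos,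
      Complex.cos]
    push_cast
    rw [show (k : ℂ) * x * Complex.I = k * (x * Complex.I) by ring,
      show -((k : ℂ) * x) * Complex.I = k * (-x * Complex.I) by ring]
    ring
  rw [this, h.tsum_eq]
  have h1 := MA_half _ n1
  have h2 := MA_half _ n2
  rw [show (1 / 2 : ℂ) = ((1 / 2 : ℝ) : ℂ) by push_cast; rfl, Complex.re_ofReal_mul, Complex.add_re]
  linarith

theorem MA_pos (g : ℝ → ℝ) (hg : IntervalIntegrable g volume (-Real.pi) Real.pi)
    (h0 : ∀ x ∈ Set.Icc (-Real.pi) Real.pi, 0 ≤ g x) (z : ℂ) (hz : ‖z‖ < 1) :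
    0 ≤ 2 * (∑' k : ℕ, (cosFourierCoef g k : ℂ) * z ^ k).re - cosFourierCoef g 0 := by
  have hpi : -Real.pi ≤ Real.pi := by linarith [Real.pi_pos]
  have hgi : Integrable g (volume.restrict (Set.Ioc (-Real.pi) Real.pi)) :=
    (intervalIntegrable_iff_integrableOn_Ioc_of_le hpi).1 hg
  set μ := volume.restrict (Set.Ioc (-Real.pi) Real.pi) with hμ
  set F : ℕ → ℝ → ℂ := fun k x => ((g x * Real.cos (k * x) : ℝ) : ℂ) * z ^ k with hF
  have hint : ∀ k : ℕ, Integrable (fun x => g x * Real.cos (k * x)) μ := by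
    intro k
    refine hgi.mul_bdd (c := 1) (by fun_prop) (ae_of_all _ fun x => ?_)
    simpa using Real.abs_cos_le_one _
  have hFi : ∀ k, Integrable (F k) μ := fun k => (hint k).ofReal.mul_const _
  have hsum : Summable fun k => ∫ x, ‖F k x‖ ∂μ := by
    refine Summable.of_nonneg_of_le (fun k => integral_nonneg fun x => norm_nonneg _)
      (f := fun k => (∫ x, ‖g x‖ ∂μ) * ‖z‖ ^ k) (fun k => ?_)
      ((summable_geometric_of_lt_one (norm_nonneg _) hz).mul_left _)
    rw [← integral_mul_const]
    refine integral_mono (hFi k).norm (hgi.norm.mul_const _) fun x => ?_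
    simp only [hF, norm_mul, norm_pow, Complex.norm_real]
    gcongr
    have := Real.abs_cos_le_one (k * x)
    exact mul_le_of_le_one_right (norm_nonneg _) (by simpa using this)
  have key := hasSum_integral_of_summable_integral_norm hFi hsum
  have hFint : ∀ k, ∫ x, F k x ∂μ = (2 * Real.pi) * ((cosFourierCoef g k : ℂ) * z ^ k) := by
    intro k
    simp only [hF, integral_mul_const, integral_complex_ofReal, cosFourierCoef]
    rw [intervalIntegral.integral_of_le hpi]
    have : (Real.pi : ℂ) ≠ 0 := by exact_mod_cast Real.pi_ne_zero
    push_cast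
    field_simp
    rw [mul_comm]
  simp_rw [hFint] at key
  have hpi' : (2 * Real.pi : ℂ) ≠ 0 := by exact_mod_cast (by positivity : 2 * Real.pi ≠ 0)
  have key2 := key.tsum_eq
  rw [tsum_mul_left] at key2
  set K : ℝ → ℂ := fun x => ∑' k : ℕ, (Real.cos (k * x) : ℂ) * z ^ k with hK
  have hbd : ∀ (k : ℕ) (x : ℝ), ‖(Real.cos (k * x) : ℂ) * z ^ k‖ ≤ ‖z‖ ^ k := by
    intro k x
    rw [norm_mul, norm_pow, Complex.norm_real]
    exact mul_le_of_le_one_left (by positivity) (Real.abs_cos_le_one _)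
  have hgeo := summable_geometric_of_lt_one (norm_nonneg _) hz
  have hKc : Continuous K := by
    refine continuous_tsum (fun k => ?_) hgeo hbd
    exact (Complex.continuous_ofReal.comp (by fun_prop)).mul continuous_const
  have hKb : ∀ x, ‖K x‖ ≤ ∑' k : ℕ, ‖z‖ ^ k := fun x =>
    tsum_of_norm_bounded hgeo.hasSum fun k => hbd k x
  have hFK : ∀ x, ∑' k, F k x = (g x : ℂ) * K x := by
    intro x
    rw [hK, ← tsum_mul_left]
    refine tsum_congr fun k => ?_
    simp only [hF]
    push_cast
    ring
  simp_rw [hFK] at key2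
  have hgK : Integrable (fun x => (g x : ℂ) * K x) μ :=
    hgi.ofReal.mul_bdd hKc.aestronglyMeasurable (ae_of_all _ hKb)
  have hre : (∫ x, (g x : ℂ) * K x ∂μ).re = ∫ x, g x * (K x).re ∂μ := by
    have := integral_re hgK
    simp only [RCLike.re_eq_complex_re, Complex.re_ofReal_mul] at this
    exact this.symm
  have hgK' : Integrable (fun x => g x * (K x).re) μ := by
    have := hgK.re
    simpa only [RCLike.re_eq_complex_re, Complex.re_ofReal_mul] using this
  have hle : ∫ x, g x * (1 / 2) ∂μ ≤ ∫ x, g x * (K x).re ∂μ := by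
    refine integral_mono_ae (hgi.mul_const _) hgK' ?_
    filter_upwards [ae_restrict_mem measurableSet_Ioc] with x hx
    exact mul_le_mul_of_nonneg_left (MA_kernel z hz x) (h0 x (Set.Ioc_subset_Icc_self hx))
  rw [← hre, ← key2, integral_mul_const] at hle
  rw [show (2 * Real.pi : ℂ) = ((2 * Real.pi : ℝ) : ℂ) by push_cast; rfl,
    Complex.re_ofReal_mul] at hle
  have ha0 : cosFourierCoef g 0 = (1 / (2 * Real.pi)) * ∫ x, g x ∂μ := by
    simp [cosFourierCoef, intervalIntegral.integral_of_le hpi, hμ]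
  have : ∫ x, g x ∂μ = (2 * Real.pi) * cosFourierCoef g 0 := by
    rw [ha0]
    field_simp
  rw [this] at hle
  have hpp : 0 < 2 * Real.pi := by positivity
  have h5 : (2 * Real.pi) * (cosFourierCoef g 0 * (1 / 2)) ≤
      (2 * Real.pi) * (∑' k : ℕ, (cosFourierCoef g k : ℂ) * z ^ k).re := by linarith
  have := le_of_mul_le_mul_left h5 hpp
  linarith

theorem MA_int (g : ℝ → ℝ) (hg : Measurable g) (B : ℝ) (hB : ∀ x, |g x| ≤ B) (k : ℕ) :
    IntervalIntegrable (fun x => g x * Real.cos (k * x)) volume (-Real.pi) Real.pi := by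
  have h1 : ∀ x, ‖g x * Real.cos (k * x)‖ ≤ ‖B‖ := by
    intro x
    rw [norm_mul]
    have h1 := hB x
    have h2 := Real.abs_cos_le_one (k * x)
    have h3 := le_abs_self B
    simp only [Real.norm_eq_abs]
    nlinarith [abs_nonneg (g x), abs_nonneg (Real.cos (k * x))]
  have hc : IntervalIntegrable (fun _ : ℝ => B) volume (-Real.pi) Real.pi :=
    intervalIntegrable_const
  refine hc.mono_fun (by fun_prop) (ae_of_all _ h1)

theorem MA_int0 (g : ℝ → ℝ) (hg : Measurable g) (B : ℝ) (hB : ∀ x, |g x| ≤ B) :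
    IntervalIntegrable g volume (-Real.pi) Real.pi := by
  simpa using MA_int g hg B hB 0

theorem MA_coefbd (g : ℝ → ℝ) (B : ℝ) (hB : ∀ x, |g x| ≤ B) (k : ℕ) :
    |cosFourierCoef g k| ≤ B := by
  have h := intervalIntegral.norm_integral_le_of_norm_le_const (a := -Real.pi) (b := Real.pi)
    (f := fun x => g x * Real.cos (k * x)) (C := B) (fun x _ => by
      rw [norm_mul]
      have h1 := hB x
      have h2 := Real.abs_cos_le_one (k * x)
      simp only [Real.norm_eq_abs]
      nlinarith [abs_nonneg (g x), abs_nonneg (Real.cos (k * x))])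
  have hp := Real.pi_pos
  rw [cosFourierCoef, abs_mul, abs_of_pos (by positivity : 0 < 1 / (2 * Real.pi))]
  rw [Real.norm_eq_abs, abs_of_pos (by linarith : 0 < Real.pi - -Real.pi)] at h
  calc _ ≤ 1 / (2 * Real.pi) * (B * (Real.pi - -Real.pi)) := by gcongr
    _ = B := by field_simp; ring

theorem MA_coef_sub (g h : ℝ → ℝ) (hg : Measurable g) (hh : Measurable h) (B : ℝ)
    (hB : ∀ x, |g x| ≤ B) (B' : ℝ) (hB' : ∀ x, |h x| ≤ B') (k : ℕ) :
    cosFourierCoef (fun x => g x - h x) k = cosFourierCoef g k - cosFourierCoef h k := by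
  simp only [cosFourierCoef, sub_mul]
  rw [intervalIntegral.integral_sub (MA_int g hg B hB k) (MA_int h hh B' hB' k)]
  ring

theorem MA_coef_const (b : ℝ) (k : ℕ) :
    cosFourierCoef (fun _ => b) k = if k = 0 then b else 0 := by
  have hp := Real.pi_pos
  rw [cosFourierCoef, intervalIntegral.integral_const_mul]
  split_ifs with h
  · subst h
    simp
    field_simp
    ring
  · have hk : (k : ℝ) ≠ 0 := by exact_mod_cast h
    rw [intervalIntegral.integral_comp_mul_left (fun x => Real.cos x) hk, integral_cos]
    simp

theorem MA_summable (a : ℕ → ℝ) (B : ℝ) (hB : ∀ k, |a k| ≤ B) (z : ℂ) (hz : ‖z‖ < 1) :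
    Summable fun k => (a k : ℂ) * z ^ k := by
  refine Summable.of_norm_bounded (g := fun k => B * ‖z‖ ^ k)
    ((summable_geometric_of_lt_one (norm_nonneg _) hz).mul_left _) fun k => ?_
  rw [norm_mul, norm_pow, Complex.norm_real]
  gcongr
  exact hB k

theorem MA_le (g : ℝ → ℝ) (hg : Measurable g) (B : ℝ) (hB : ∀ x, |g x| ≤ B) (b : ℝ)
    (hb : ∀ x ∈ Set.Icc (-Real.pi) Real.pi, g x ≤ b) (z : ℂ) (hz : ‖z‖ < 1) :
    2 * (∑' k : ℕ, (cosFourierCoef g k : ℂ) * z ^ k).re - cosFourierCoef g 0 ≤ b := by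
  have hbb : ∀ x : ℝ, |(fun _ : ℝ => b) x| ≤ |b| := fun x => le_rfl
  have hcs := MA_coef_sub (fun _ => b) g measurable_const hg |b| hbb B hB
  have h := MA_pos (fun x => b - g x)
    (intervalIntegrable_const.sub (MA_int0 g hg B hB)) (fun x hx => sub_nonneg.2 (hb x hx)) z hz
  simp only [hcs] at h
  push_cast at h
  simp only [sub_mul] at h
  rw [Summable.tsum_sub (MA_summable _ |b| (MA_coefbd _ _ hbb) z hz)
    (MA_summable _ B (MA_coefbd _ _ hB) z hz)] at h
  rw [tsum_eq_single 0 (fun k hk => by simp [MA_coef_const, hk])] at h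
  simp only [MA_coef_const, Complex.sub_re] at h
  simp at h
  linarith

theorem MA_coef_ge (g : ℝ → ℝ) (hg : Measurable g) (B : ℝ) (hB : ∀ x, |g x| ≤ B) (b : ℝ)
    (hb : ∀ x ∈ Set.Icc (-Real.pi) Real.pi, b ≤ g x) : b ≤ cosFourierCoef g 0 := by
  have hp := Real.pi_pos
  have := intervalIntegral.integral_mono_on (a := -Real.pi) (b := Real.pi) (by linarith)
    (intervalIntegrable_const (c := b)) (MA_int0 g hg B hB) hb
  simp only [intervalIntegral.integral_const, smul_eq_mul] at this
  simp only [cosFourierCoef, Nat.cast_zero, zero_mul, Real.cos_zero, mul_one]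
  rw [one_div, ← div_eq_inv_mul, le_div_iff₀ (by positivity)]
  linarith

theorem MA_normsq_exp (w : ℂ) : ‖Complex.exp w‖ ^ 2 = Real.exp (2 * w.re) := by
  rw [Complex.norm_exp, ← Real.exp_nat_mul]
  norm_num

theorem MA_normsq_sub (w : ℂ) : ‖w - 1‖ ^ 2 = ‖w‖ ^ 2 + 1 - 2 * w.re := by
  rw [← Complex.normSq_eq_norm_sq, ← Complex.normSq_eq_norm_sq, Complex.normSq_apply,
    Complex.normSq_apply]
  simp
  ring

open Metric in
theorem MA_core (u v : ℝ → ℝ) (hu : Measurable u) (hv : Measurable v) (B : ℝ)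
    (hBu : ∀ x, |u x| ≤ B) (hBv : ∀ x, |v x| ≤ B) (α β δ : ℝ)
    (hα : ∀ x, α ≤ u x) (hβ : ∀ x, u x ≤ β)
    (hδ : ∀ x ∈ Set.Icc (-Real.pi) Real.pi, |v x - u x| ≤ δ) (c d : ℕ → ℝ)
    (hc : IsMARecR (fun k => cosFourierCoef u k) c)
    (hd : IsMARecR (fun k => cosFourierCoef v k) d) (N : ℕ) (r : ℝ) (hr : 0 < r) (hr1 : r < 1) :
    ∑ k ∈ Finset.range N, ((d k - c k) * r ^ k) ^ 2 ≤
      Real.exp (β - α) * (Real.exp (2 * δ) - 1) := by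
  have hau := MA_coefbd u B hBu
  have hav := MA_coefbd v B hBv
  have hdu := (MA_series _ B hau).1
  have hdv := (MA_series _ B hav).1
  have hcu := MA_coeff _ c B hau hc
  have hcv := MA_coeff _ d B hav hd
  have hBw : ∀ x, |(fun x => v x - u x) x| ≤ B + B := fun x =>
    (abs_sub _ _).trans (add_le_add (hBv x) (hBu x))
  have hcs := MA_coef_sub v u hv hu B hBv B hBu
  set Su : ℂ → ℂ := fun z : ℂ => ∑' k, (cosFourierCoef u k : ℂ) * z ^ k with hSu
  set Sv : ℂ → ℂ := fun z : ℂ => ∑' k, (cosFourierCoef v k : ℂ) * z ^ k with hSv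
  set C : ℂ → ℂ := fun z => Complex.exp (Su z - cosFourierCoef u 0) with hC
  set D : ℂ → ℂ := fun z => Complex.exp (Sv z - cosFourierCoef v 0) with hD
  set E : ℂ → ℂ := fun z =>
    Complex.exp ((Sv z - cosFourierCoef v 0) - (Su z - cosFourierCoef u 0)) with hE
  have hCd : DifferentiableOn ℂ C (ball 0 1) := (hdu.sub_const _).cexp
  have hDd : DifferentiableOn ℂ D (ball 0 1) := (hdv.sub_const _).cexp
  have hEd : DifferentiableOn ℂ E (ball 0 1) := ((hdv.sub_const _).sub (hdu.sub_const _)).cexp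
  have hnhds : ball (0 : ℂ) 1 ∈ 𝓝 (0 : ℂ) := ball_mem_nhds _ one_pos
  have hbes := MA_bessel (D - C) (hDd.sub hCd) r hr hr1 N
  have hcoef : ∀ k : ℕ, ‖iteratedDeriv k (D - C) 0 / k.factorial * r ^ k‖ ^ 2
      = ((d k - c k) * r ^ k) ^ 2 := by
    intro k
    rw [iteratedDeriv_sub (hDd.analyticAt hnhds).contDiffAt (hCd.analyticAt hnhds).contDiffAt]
    rw [hcu, hcv]
    have hk : (k.factorial : ℂ) ≠ 0 := by exact_mod_cast k.factorial_ne_zero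
    rw [← mul_sub, mul_div_cancel_left₀ _ hk, ← sq_abs ((d k - c k) * r ^ k), ← Real.norm_eq_abs,
      ← Complex.norm_real]
    push_cast
    rfl
  simp only [hcoef] at hbes
  refine hbes.trans ?_
  set K := Real.exp (β - α)
  have hsub : sphere (0 : ℂ) |r| ⊆ ball 0 1 := by
    intro z hz
    simp only [mem_sphere_iff_norm, sub_zero, abs_of_pos hr] at hz
    simpa [hz] using hr1
  have hpt : ∀ z ∈ sphere (0 : ℂ) |r|, ‖(D - C) z‖ ^ 2 ≤
      K * (Real.exp (2 * δ) + 1 - 2 * (E z).re) := by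
    intro z hz
    have hz1 : ‖z‖ < 1 := by simpa using hsub hz
    have e1 : (D - C) z = C z * (E z - 1) := by
      simp only [Pi.sub_apply, hC, hD, hE]
      rw [mul_sub, ← Complex.exp_add]
      ring_nf
    rw [e1, norm_mul, mul_pow, MA_normsq_sub]
    have h1 : ‖C z‖ ^ 2 ≤ K := by
      rw [hC, MA_normsq_exp]
      apply Real.exp_le_exp.2
      have h2 := MA_le u hu B hBu β (fun x _ => hβ x) z hz1
      have h3 := MA_coef_ge u hu B hBu α (fun x _ => hα x)
      simp only [Complex.sub_re, Complex.ofReal_re]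
      change 2 * (Su z).re - _ ≤ _ at h2
      linarith
    have h2 : ‖E z‖ ^ 2 ≤ Real.exp (2 * δ) := by
      rw [hE, MA_normsq_exp]
      apply Real.exp_le_exp.2
      have hw : Measurable (fun x => v x - u x) := hv.sub hu
      have h2 := MA_le _ hw _ hBw δ (fun x hx => (abs_le.1 (hδ x hx)).2) z hz1
      have h3 := MA_coef_ge _ hw _ hBw (-δ) (fun x hx => (abs_le.1 (hδ x hx)).1)
      simp only [hcs] at h2 h3
      push_cast at h2
      simp only [sub_mul] at h2
      rw [Summable.tsum_sub (MA_summable _ B hav z hz1) (MA_summable _ B hau z hz1)] at h2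
      change 2 * (Sv z - Su z).re - _ ≤ _ at h2
      simp only [Complex.sub_re, Complex.ofReal_re] at h2 ⊢
      linarith
    have h3 : 0 ≤ ‖E z‖ ^ 2 + 1 - 2 * (E z).re := by
      rw [← MA_normsq_sub]
      positivity
    calc _ ≤ K * (‖E z‖ ^ 2 + 1 - 2 * (E z).re) := mul_le_mul_of_nonneg_right h1 h3
      _ ≤ _ := by
        apply mul_le_mul_of_nonneg_left _ (Real.exp_pos _).le
        linarith
  have hEc : ContinuousOn E (sphere 0 |r|) := hEd.continuousOn.mono hsub
  have hEi : CircleIntegrable E 0 r := hEc.circleIntegrable'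
  have hRe : CircleIntegrable (fun z => (E z).re) 0 r :=
    (Complex.continuous_re.comp_continuousOn hEc).circleIntegrable'
  have hi1 : CircleIntegrable (fun z => ‖(D - C) z‖ ^ 2) 0 r :=
    (((hDd.sub hCd).continuousOn.mono hsub).norm.pow 2).circleIntegrable'
  have hi2 : CircleIntegrable (fun z => K * (Real.exp (2 * δ) + 1 - 2 * (E z).re)) 0 r := by
    apply ContinuousOn.circleIntegrable'
    have := Complex.continuous_re.comp_continuousOn hEc
    exact continuousOn_const.mul (continuousOn_const.sub (continuousOn_const.mul this))
  refine (Real.circleAverage_mono hi1 hi2 hpt).trans (le_of_eq ?_)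
  have hdc : DiffContOnCl ℂ E (ball 0 |r|) :=
    (hEd.mono (by
      rw [abs_of_pos hr, closure_ball _ hr.ne']
      exact closedBall_subset_ball hr1)).diffContOnCl
  have hav1 := hdc.circleAverage
  have hE0 : E 0 = 1 := by
    have h1 := (MA_series _ B hau).2 0
    have h2 := (MA_series _ B hav).2 0
    simp only [iteratedDeriv_zero, Nat.factorial_zero, Nat.cast_one, one_mul] at h1 h2
    simp only [hE, hSu, hSv, h1, h2]
    simp
  rw [hE0] at hav1
  have hreav : Real.circleAverage (fun z => (E z).re) 0 r = 1 := by
    have := Complex.reCLM.circleAverage_comp_comm hEi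
    rw [hav1] at this
    simpa [Function.comp_def] using this
  have hlin : Real.circleAverage (fun z => K * (Real.exp (2 * δ) + 1 - 2 * (E z).re)) 0 r
      = K * (Real.exp (2 * δ) + 1 - 2 * Real.circleAverage (fun z => (E z).re) 0 r) := by
    have s1 := Real.circleAverage_fun_smul (𝕜 := ℝ) (a := K) (c := (0 : ℂ)) (R := r)
      (f := fun z => (Real.exp (2 * δ) + 1 - 2 * (E z).re))
    have s2 := Real.circleAverage_fun_smul (𝕜 := ℝ) (a := 2) (c := (0 : ℂ)) (R := r)
      (f := fun z => (E z).re)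
    have hi3 : CircleIntegrable (fun z => 2 * (E z).re) 0 r := by
      apply ContinuousOn.circleIntegrable'
      exact continuousOn_const.mul (Complex.continuous_re.comp_continuousOn hEc)
    have s3 := Real.circleAverage_fun_sub (c := (0 : ℂ)) (R := r)
      (f₁ := fun _ : ℂ => Real.exp (2 * δ) + 1)
      (f₂ := fun z => 2 * (E z).re) (circleIntegrable_const _ _ _) hi3
    simp only [smul_eq_mul] at s1 s2
    rw [s1, s3, s2, Real.circleAverage_const]
  rw [hlin, hreav]
  ring

theorem MA_core1 (u v : ℝ → ℝ) (hu : Measurable u) (hv : Measurable v) (B : ℝ)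
    (hBu : ∀ x, |u x| ≤ B) (hBv : ∀ x, |v x| ≤ B) (α β δ : ℝ)
    (hα : ∀ x, α ≤ u x) (hβ : ∀ x, u x ≤ β)
    (hδ : ∀ x ∈ Set.Icc (-Real.pi) Real.pi, |v x - u x| ≤ δ) (c d : ℕ → ℝ)
    (hc : IsMARecR (fun k => cosFourierCoef u k) c)
    (hd : IsMARecR (fun k => cosFourierCoef v k) d) :
    ∑' k : ℕ, ENNReal.ofReal ((d k - c k) ^ 2) ≤
      ENNReal.ofReal (Real.exp (β - α) * (Real.exp (2 * δ) - 1)) := by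
  refine ENNReal.tsum_le_of_sum_range_le fun N => ?_
  rw [← ENNReal.ofReal_sum_of_nonneg (fun i _ => sq_nonneg _)]
  apply ENNReal.ofReal_le_ofReal
  have hcont : Continuous fun r : ℝ => ∑ k ∈ Finset.range N, ((d k - c k) * r ^ k) ^ 2 := by
    fun_prop
  have ht : Tendsto (fun r : ℝ => ∑ k ∈ Finset.range N, ((d k - c k) * r ^ k) ^ 2) (𝓝[<] 1)
      (𝓝 (∑ k ∈ Finset.range N, (d k - c k) ^ 2)) := by
    have := (hcont.tendsto 1).mono_left (nhdsWithin_le_nhds (s := Set.Iio 1))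
    simpa using this
  refine le_of_tendsto ht ?_
  filter_upwards [Ioo_mem_nhdsLT (zero_lt_one' ℝ)] with r hr
  exact MA_core u v hu hv B hBu hBv α β δ hα hβ hδ c d hc hd N r hr.1 hr.2

theorem MA_log (a b s : ℝ) (hs : 0 < s) (ha : s ≤ a) (hb : s ≤ b) :
    |Real.log a - Real.log b| ≤ |a - b| / s := by
  have key : ∀ a b : ℝ, s ≤ a → s ≤ b → Real.log a - Real.log b ≤ |a - b| / s := by
    intro a b ha hb
    have ha0 := hs.trans_le ha
    have hb0 := hs.trans_le hb
    rw [← Real.log_div ha0.ne' hb0.ne']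
    have h1 := Real.log_le_sub_one_of_pos (div_pos ha0 hb0)
    have h2 : a / b - 1 = (a - b) / b := by field_simp
    rw [h2] at h1
    refine h1.trans ?_
    calc (a - b) / b ≤ |a - b| / b := by gcongr; exact le_abs_self _
      _ ≤ _ := by gcongr
  rw [abs_le]
  have h1 := key a b ha hb
  have h2 := key b a hb ha
  rw [abs_sub_comm] at h2
  constructor <;> linarith

/-- If `f` is 2π-periodic, even, measurable with `0 < m ≤ f ≤ M`, the `f_n` are
2π-periodic, even, measurable with `0 < C₁ ≤ f_n ≤ C₂`, and `f_n → f` uniformly on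
`[-π, π]`, and `(c_k)`, `(ĉ_{k,n})` are obtained by the MA recursion from the Fourier
coefficients of `log f` and `log f_n`, then `∑_{k=0}^∞ (ĉ_{k,n} - c_k)² → 0`. -/
theorem statement5 (f : ℝ → ℝ) (fn : ℕ → ℝ → ℝ) (m M C₁ C₂ : ℝ)
    (hm : 0 < m) (hbound : ∀ x, m ≤ f x ∧ f x ≤ M)
    (hC₁ : 0 < C₁) (hC₁₂ : C₁ < C₂)
    (hnbound : ∀ n x, C₁ ≤ fn n x ∧ fn n x ≤ C₂)
    (hf_per : Function.Periodic f (2 * Real.pi))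
    (hfn_per : ∀ n, Function.Periodic (fn n) (2 * Real.pi))
    (hf_even : ∀ x, f (-x) = f x) (hfn_even : ∀ n x, fn n (-x) = fn n x)
    (hf_meas : Measurable f) (hfn_meas : ∀ n, Measurable (fn n))
    (hunif : TendstoUniformlyOn fn f atTop (Set.Icc (-Real.pi) Real.pi))
    (c : ℕ → ℝ) (chat : ℕ → ℕ → ℝ)
    (hc : IsMARecR (fun k => cosFourierCoef (fun x => Real.log (f x)) k) c)
    (hchat : ∀ n, IsMARecR (fun k => cosFourierCoef (fun x => Real.log (fn n x)) k) (chat n)) :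
    Tendsto (fun n => ∑' k : ℕ, ENNReal.ofReal ((chat n k - c k) ^ 2)) atTop (𝓝 0) := by
  have hs : 0 < min m C₁ := lt_min hm hC₁
  set s := min m C₁
  have hfpos : ∀ x, 0 < f x := fun x => hm.trans_le (hbound x).1
  have hnpos : ∀ n x, 0 < fn n x := fun n x => hC₁.trans_le (hnbound n x).1
  set u : ℝ → ℝ := fun x => Real.log (f x) with hu
  set B := |Real.log m| + |Real.log M| + |Real.log C₁| + |Real.log C₂|
  have hl1 : ∀ x, Real.log m ≤ u x := fun x => Real.log_le_log hm (hbound x).1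
  have hl2 : ∀ x, u x ≤ Real.log M := fun x => Real.log_le_log (hfpos x) (hbound x).2
  have hBu : ∀ x, |u x| ≤ B := by
    intro x
    have h1 := hl1 x
    have h2 := hl2 x
    rw [abs_le]
    constructor <;> simp only [B] <;>
      linarith [neg_abs_le (Real.log m), le_abs_self (Real.log M), abs_nonneg (Real.log M),
        abs_nonneg (Real.log m), abs_nonneg (Real.log C₁), abs_nonneg (Real.log C₂)]
  have hBv : ∀ n x, |Real.log (fn n x)| ≤ B := by
    intro n x
    have h1 := Real.log_le_log hC₁ (hnbound n x).1
    have h2 := Real.log_le_log (hnpos n x) (hnbound n x).2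
    rw [abs_le]
    constructor <;> simp only [B] <;>
      linarith [neg_abs_le (Real.log C₁), le_abs_self (Real.log C₂), abs_nonneg (Real.log M),
        abs_nonneg (Real.log m), abs_nonneg (Real.log C₁), abs_nonneg (Real.log C₂)]
  have hlim : Tendsto (fun δ : ℝ => ENNReal.ofReal
      (Real.exp (Real.log M - Real.log m) * (Real.exp (2 * δ) - 1))) (𝓝[>] 0) (𝓝 0) := by
    have hcont : Continuous fun δ : ℝ => ENNReal.ofReal
      (Real.exp (Real.log M - Real.log m) * (Real.exp (2 * δ) - 1)) :=
      ENNReal.continuous_ofReal.comp (by fun_prop)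
    have := (hcont.tendsto 0).mono_left (nhdsWithin_le_nhds (s := Set.Ioi 0))
    simpa using this
  rw [ENNReal.tendsto_nhds_zero]
  intro ε hε
  obtain ⟨δ, hδε, hδ⟩ := ((hlim.eventually (ge_mem_nhds hε)).and self_mem_nhdsWithin).exists
  have hδ' : 0 < δ := hδ
  have hev := Metric.tendstoUniformlyOn_iff.1 hunif (δ * s) (by positivity)
  filter_upwards [hev] with n hn
  refine le_trans (MA_core1 u (fun x => Real.log (fn n x)) hf_meas.log (hfn_meas n).log B hBu
    (hBv n) (Real.log m) (Real.log M) δ hl1 hl2 ?_ c (chat n) hc (hchat n)) hδε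
  intro x hx
  have h1 := hn x hx
  rw [dist_comm, Real.dist_eq] at h1
  refine (MA_log _ _ s hs ((min_le_right _ _).trans (hnbound n x).1)
    ((min_le_left _ _).trans (hbound x).1)).trans ?_
  rw [div_le_iff₀ hs]
  exact h1.le
end

section
/- Let a₀, â₀ ∈ ℝ and let (a_k)_{k≥1}, (â_k)_{k≥1} be real sequences with Σ_{k≥1} |a_k| < ∞ and Σ_{k≥1} |â_k| < ∞. Define f(λ) := exp(a₀ + 2 Σ_{k≥1} a_k cos(kλ)) and f̂(λ) := exp(â₀ + 2 Σ_{k≥1} â_k cos(kλ)), and set σ := (2π e^{a₀})^{1/2}, σ̂ := (2π e^{â₀})^{1/2}. Let (c_k) and (ĉ_k) be obtained from (a_k)_{k≥1} and (â_k)_{k≥1} by the MA recursion. Then Σ_{k=0}^∞ (σ c_k − σ̂ ĉ_k)² ≤ ∫₀^{2π} ( f(λ)^{1/2} − f̂(λ)^{1/2} )² dλ + ( sup_{λ∈[0,2π]} (f(λ) f̂(λ))^{1/2} ) · ∫₀^{2π} ( log f(λ) − log f̂(λ) )² dλ. -/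
open MeasureTheory Filter Topology

/-- The spectral density with cepstral coefficients `a₀` and `(a_k)_{k ≥ 1}`:
`f(λ) = exp (a₀ + 2 ∑_{k ≥ 1} a_k cos (kλ))`. -/
noncomputable def expSpec (a0 : ℝ) (a : ℕ → ℝ) (x : ℝ) : ℝ :=
  Real.exp (a0 + 2 * ∑' k : ℕ, a (k + 1) * Real.cos (((k : ℝ) + 1) * x))

/-- `σ = (2π e^{a₀})^{1/2}`. -/
noncomputable def sigmaOf (a0 : ℝ) : ℝ := Real.sqrt (2 * Real.pi * Real.exp a0)


/-- The power series `∑_{k ≥ 1} a_k X^k`. -/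
noncomputable def cepSeries (a : ℕ → ℝ) : PowerSeries ℝ :=
  PowerSeries.mk fun k => if k = 0 then 0 else a k

/-- Coefficients of `(∑ a_k X^k)^m / m!`. -/
noncomputable def expTerm (a : ℕ → ℝ) (m k : ℕ) : ℝ :=
  PowerSeries.coeff k (cepSeries a ^ m) / (m.factorial : ℝ)

lemma cep_coeff_succ (a : ℕ → ℝ) (k : ℕ) : PowerSeries.coeff (k + 1) (cepSeries a) = a (k + 1) := by
  simp [cepSeries]

lemma cep_coeff_zero (a : ℕ → ℝ) : PowerSeries.coeff 0 (cepSeries a) = 0 := by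
  simp [cepSeries]

lemma cep_summable (a : ℕ → ℝ) (ha : Summable fun k : ℕ => |a (k + 1)|) :
    Summable fun k => |PowerSeries.coeff k (cepSeries a)| := by
  rw [← summable_nat_add_iff 1]
  simpa [cep_coeff_succ] using ha

lemma cep_pow_summable (a : ℕ → ℝ) (ha : Summable fun k : ℕ => |a (k + 1)|) (m : ℕ) :
    (Summable fun k => |PowerSeries.coeff k (cepSeries a ^ m)|) ∧
      ∑' k, |PowerSeries.coeff k (cepSeries a ^ m)| ≤
        (∑' k, |PowerSeries.coeff k (cepSeries a)|) ^ m := by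
  have h1 := cep_summable a ha
  induction m with
  | zero =>
    have h : ∀ k, k ≠ 0 → |PowerSeries.coeff k (cepSeries a ^ 0)| = 0 := by
      intro k hk; simp [PowerSeries.coeff_one, hk]
    refine ⟨(hasSum_single 0 h).summable, ?_⟩
    rw [(hasSum_single 0 h).tsum_eq]; simp
  | succ m ih =>
    obtain ⟨ih1, ih2⟩ := ih
    have hs := summable_norm_sum_mul_antidiagonal_of_summable_norm (R := ℝ)
      (f := fun k => |PowerSeries.coeff k (cepSeries a ^ m)|)
      (g := fun k => |PowerSeries.coeff k (cepSeries a)|) (by simpa using ih1) (by simpa using h1)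
    have ht := tsum_mul_tsum_eq_tsum_sum_antidiagonal_of_summable_norm (R := ℝ)
      (f := fun k => |PowerSeries.coeff k (cepSeries a ^ m)|)
      (g := fun k => |PowerSeries.coeff k (cepSeries a)|) (by simpa using ih1) (by simpa using h1)
    have hle : ∀ k, |PowerSeries.coeff k (cepSeries a ^ (m + 1))| ≤
        ∑ kl ∈ Finset.HasAntidiagonal.antidiagonal k, |PowerSeries.coeff kl.1 (cepSeries a ^ m)| *
          |PowerSeries.coeff kl.2 (cepSeries a)| := by
      intro k
      rw [pow_succ, PowerSeries.coeff_mul]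
      refine (Finset.abs_sum_le_sum_abs _ _).trans (le_of_eq ?_)
      simp [abs_mul]
    have hsum := hs.of_norm
    have hsm := Summable.of_nonneg_of_le (fun _ => abs_nonneg _) hle hsum
    refine ⟨hsm, (hsm.tsum_le_tsum hle hsum).trans ?_⟩
    rw [← ht, pow_succ]
    exact mul_le_mul_of_nonneg_right ih2 (tsum_nonneg fun _ => abs_nonneg _)

lemma cep_pow_tsum (a : ℕ → ℝ) (ha : Summable fun k : ℕ => |a (k + 1)|) (z : ℂ) (hz : ‖z‖ = 1)
    (m : ℕ) :
    ∑' k, ((PowerSeries.coeff k (cepSeries a ^ m) : ℝ) : ℂ) * z ^ k =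
      (∑' k, ((PowerSeries.coeff k (cepSeries a) : ℝ) : ℂ) * z ^ k) ^ m := by
  have h1 := cep_summable a ha
  induction m with
  | zero =>
    rw [tsum_eq_single 0]
    · simp
    · intro k hk; simp [PowerSeries.coeff_one, hk]
  | succ m ih =>
    rw [pow_succ (∑' k, ((PowerSeries.coeff k (cepSeries a) : ℝ) : ℂ) * z ^ k), ← ih,
      tsum_mul_tsum_eq_tsum_sum_antidiagonal_of_summable_norm]
    · refine tsum_congr fun k => ?_
      rw [pow_succ, PowerSeries.coeff_mul, Complex.ofReal_sum, Finset.sum_mul]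
      refine Finset.sum_congr rfl fun p hp => ?_
      rw [← Finset.HasAntidiagonal.mem_antidiagonal.1 hp, pow_add]
      push_cast; ring
    · simpa [hz] using (cep_pow_summable a ha m).1
    · simpa [hz] using h1

lemma expTerm_summable (a : ℕ → ℝ) (ha : Summable fun k : ℕ => |a (k + 1)|) :
    Summable fun p : ℕ × ℕ => |expTerm a p.1 p.2| := by
  have e : ∀ m k, |expTerm a m k| = |PowerSeries.coeff k (cepSeries a ^ m)| / (m.factorial : ℝ) := by
    intro m k; simp [expTerm, abs_div]
  rw [summable_prod_of_nonneg (fun _ => abs_nonneg _)]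
  refine ⟨fun m => ?_, ?_⟩
  · simp only [e]; exact (cep_pow_summable a ha m).1.div_const _
  · simp only [e, tsum_div_const]
    refine Summable.of_nonneg_of_le (fun m => by positivity) (fun m => ?_)
      (Real.summable_pow_div_factorial (∑' k, |PowerSeries.coeff k (cepSeries a)|))
    exact div_le_div_of_nonneg_right (cep_pow_summable a ha m).2 (by positivity)

lemma expTerm_summable_left (a : ℕ → ℝ) (ha : Summable fun k : ℕ => |a (k + 1)|) (k : ℕ) :
    Summable fun m => expTerm a m k :=
  ((expTerm_summable a ha).of_abs).comp_injective (i := fun m => (m, k))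
    (fun _ _ h => (Prod.mk.inj h).1)

lemma expTerm_rec (a : ℕ → ℝ) (m k : ℕ) :
    ((k : ℝ) + 1) * expTerm a (m + 1) (k + 1) =
      ∑ j ∈ Finset.range (k + 1), ((k : ℝ) + 1 - j) * a (k + 1 - j) * expTerm a m j := by
  have h := PowerSeries.coeff_derivative (cepSeries a ^ (m + 1)) k
  rw [Derivation.leibniz_pow, Nat.add_sub_cancel, smul_eq_mul, map_nsmul, PowerSeries.coeff_mul,
    Finset.Nat.sum_antidiagonal_eq_sum_range_succ_mk] at h
  unfold expTerm
  have hf : ((m + 1).factorial : ℝ) = (m + 1) * m.factorial := by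
    rw [Nat.factorial_succ]; push_cast; ring
  have hm : (m.factorial : ℝ) ≠ 0 := by positivity
  have hm1 : (m : ℝ) + 1 ≠ 0 := by positivity
  calc _ = (PowerSeries.coeff (k + 1) (cepSeries a ^ (m + 1)) * ((k : ℝ) + 1)) /
        ((m + 1) * m.factorial) := by rw [hf]; ring
    _ = _ := by
      rw [← h, nsmul_eq_mul, Finset.mul_sum, Finset.sum_div]
      refine Finset.sum_congr rfl fun j hj => ?_
      have hj' : j ≤ k := Nat.lt_succ_iff.1 (Finset.mem_range.1 hj)
      simp only [PowerSeries.coeff_derivative, cep_coeff_succ]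
      rw [show k + 1 - j = k - j + 1 by omega, Nat.cast_sub hj']
      push_cast
      field_simp
      ring

lemma ma_eq (a c : ℕ → ℝ) (ha : Summable fun k : ℕ => |a (k + 1)|) (hc : IsMARecR a c) (k : ℕ) :
    c k = ∑' m, expTerm a m k := by
  induction k using Nat.strong_induction_on with
  | _ k ih =>
    cases k with
    | zero =>
      rw [hc.1, tsum_eq_single 0]
      · simp [expTerm]
      · intro m hm
        have : PowerSeries.constantCoeff (cepSeries a) = 0 := by
          simpa using cep_coeff_zero a
        simp [expTerm, this, hm]
    | succ k =>
      have hk : (k : ℝ) + 1 ≠ 0 := by positivity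
      rw [hc.2 k, (expTerm_summable_left a ha (k + 1)).tsum_eq_zero_add]
      have h0 : expTerm a 0 (k + 1) = 0 := by simp [expTerm, PowerSeries.coeff_one]
      rw [h0, zero_add]
      apply mul_left_cancel₀ hk
      rw [← tsum_mul_left]
      simp only [expTerm_rec]
      rw [Summable.tsum_finsetSum (fun j _ => (expTerm_summable_left a ha j).mul_left _),
        Finset.mul_sum]
      refine Finset.sum_congr rfl fun j hj => ?_
      rw [tsum_mul_left, ← ih j (Finset.mem_range.1 hj)]
      field_simp

lemma ma_summable (a c : ℕ → ℝ) (ha : Summable fun k : ℕ => |a (k + 1)|) (hc : IsMARecR a c) :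
    Summable fun k => |c k| := by
  have h := (expTerm_summable a ha).prod_symm
  rw [summable_prod_of_nonneg (fun _ => abs_nonneg _)] at h
  refine Summable.of_nonneg_of_le (fun _ => abs_nonneg _) (fun k => ?_) h.2
  rw [ma_eq a c ha hc k]
  exact norm_tsum_le_tsum_norm (f := fun m => expTerm a m k) (h.1 k)

/-- `∑ b_k e^{ikx}`. -/
noncomputable def trigSer (b : ℕ → ℝ) (x : ℝ) : ℂ :=
  ∑' k, (b k : ℂ) * Complex.exp (x * Complex.I) ^ k

lemma ma_exp (a c : ℕ → ℝ) (ha : Summable fun k : ℕ => |a (k + 1)|) (hc : IsMARecR a c) (x : ℝ) :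
    trigSer c x = Complex.exp (trigSer (fun k => PowerSeries.coeff k (cepSeries a)) x) := by
  unfold trigSer
  have hz := Complex.norm_exp_ofReal_mul_I x
  set z := Complex.exp (x * Complex.I)
  have hs : Summable (Function.uncurry fun m k => (expTerm a m k : ℂ) * z ^ k) := by
    apply Summable.of_norm
    refine (expTerm_summable a ha).congr fun p => ?_
    simp [Function.uncurry, hz]
  have h2 := hs.tsum_comm
  calc _ = ∑' k, ∑' m, (expTerm a m k : ℂ) * z ^ k := by
        refine tsum_congr fun k => ?_
        rw [tsum_mul_right, ma_eq a c ha hc k, Complex.ofReal_tsum]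
    _ = ∑' m, ∑' k, (expTerm a m k : ℂ) * z ^ k := h2
    _ = ∑' m : ℕ, (∑' k, ((PowerSeries.coeff k (cepSeries a) : ℝ) : ℂ) * z ^ k) ^ m / (m.factorial : ℂ) := by
        refine tsum_congr fun m => ?_
        rw [← cep_pow_tsum a ha z hz m, ← tsum_div_const]
        refine tsum_congr fun k => ?_
        simp [expTerm]; ring
    _ = _ := by
        rw [Complex.exp_eq_exp_ℂ, ← (NormedSpace.expSeries_div_hasSum_exp _).tsum_eq]

lemma expz_pow (x : ℝ) (k : ℕ) :
    Complex.exp (x * Complex.I) ^ k = Complex.exp (((k : ℤ) : ℂ) * Complex.I * x) := by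
  rw [← Complex.exp_nat_mul]; congr 1; push_cast; ring

lemma trig_hasSum (b : ℕ → ℝ) (hb : Summable fun k => |b k|) (x : ℝ) :
    HasSum (fun k => (b k : ℂ) * Complex.exp (x * Complex.I) ^ k) (trigSer b x) := by
  apply Summable.hasSum
  apply Summable.of_norm
  simpa [Complex.norm_exp_ofReal_mul_I] using hb

lemma trig_continuous (b : ℕ → ℝ) (hb : Summable fun k => |b k|) : Continuous (trigSer b) := by
  unfold trigSer
  refine continuous_tsum (fun k => by fun_prop) hb fun k x => ?_
  simp [Complex.norm_exp_ofReal_mul_I]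

lemma orth (n : ℤ) : ∫ x in (0:ℝ)..(2 * Real.pi), Complex.exp ((n : ℂ) * Complex.I * x) =
    if n = 0 then (2 * Real.pi : ℂ) else 0 := by
  split_ifs with h
  · subst h; simp
  · rw [integral_exp_mul_complex (by simp [h])]
    have : Complex.exp ((n : ℂ) * Complex.I * ((2 * Real.pi : ℝ) : ℂ)) = 1 := by
      rw [Complex.exp_eq_one_iff]; exact ⟨n, by push_cast; ring⟩
    rw [this]; simp

lemma trig_integral (b : ℕ → ℝ) (hb : Summable fun k => |b k|) (G : ℝ → ℂ) (hG : Continuous G) :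
    HasSum (fun k => (b k : ℂ) *
        ∫ x in (0:ℝ)..(2 * Real.pi), Complex.exp (x * Complex.I) ^ k * G x)
      (∫ x in (0:ℝ)..(2 * Real.pi), trigSer b x * G x) := by
  have h := intervalIntegral.hasSum_integral_of_dominated_convergence (μ := volume)
    (a := 0) (b := 2 * Real.pi)
    (F := fun k x => (b k : ℂ) * Complex.exp (x * Complex.I) ^ k * G x)
    (f := fun x => trigSer b x * G x)
    (fun k x => |b k| * ‖G x‖)
    (fun k => (by fun_prop : Continuous _).aestronglyMeasurable)
    (fun k => Eventually.of_forall fun x _ => by simp [Complex.norm_exp_ofReal_mul_I])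
    (Eventually.of_forall fun x _ => hb.mul_right _)
    (by simp only [tsum_mul_right]; exact (by fun_prop : Continuous _).intervalIntegrable _ _)
    (Eventually.of_forall fun x _ => (trig_hasSum b hb x).mul_right _)
  simpa only [mul_assoc, intervalIntegral.integral_const_mul] using h

lemma trig_coef (b : ℕ → ℝ) (hb : Summable fun k => |b k|) (n : ℤ) :
    HasSum (fun k : ℕ => (b k : ℂ) * if (k : ℤ) + n = 0 then (2 * Real.pi : ℂ) else 0)
      (∫ x in (0:ℝ)..(2 * Real.pi), trigSer b x * Complex.exp ((n : ℂ) * Complex.I * x)) := by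
  have h := trig_integral b hb (fun x => Complex.exp ((n : ℂ) * Complex.I * x)) (by fun_prop)
  convert h using 3 with k
  rw [← orth]
  congr 1; ext x
  rw [expz_pow, ← Complex.exp_add]; congr 1; push_cast; ring

lemma trig_coef_neg (b : ℕ → ℝ) (hb : Summable fun k => |b k|) (j : ℕ) :
    ∫ x in (0:ℝ)..(2 * Real.pi), trigSer b x * Complex.exp (((-(j : ℤ) : ℤ) : ℂ) * Complex.I * x)
      = 2 * Real.pi * b j := by
  refine (trig_coef b hb (-(j : ℤ))).unique ?_
  convert hasSum_single (f := fun k : ℕ => (b k : ℂ) *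
    if (k : ℤ) + (-(j : ℤ)) = 0 then (2 * Real.pi : ℂ) else 0) j ?_ using 1
  · simp; ring
  · intro k hk
    rw [if_neg (by omega), mul_zero]

lemma trig_coef_pos (b : ℕ → ℝ) (hb : Summable fun k => |b k|) (hb0 : b 0 = 0) (j : ℕ) :
    ∫ x in (0:ℝ)..(2 * Real.pi), trigSer b x * Complex.exp (x * Complex.I) ^ j = 0 := by
  simp only [expz_pow]
  refine (trig_coef b hb (j : ℤ)).unique ?_
  convert hasSum_zero (α := ℂ) (β := ℕ) using 2 with k
  rcases Nat.eq_zero_or_pos k with rfl | hk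
  · simp [hb0]
  · rw [if_neg (by omega), mul_zero]

lemma trig_int_zero (b : ℕ → ℝ) (hb : Summable fun k => |b k|) (hb0 : b 0 = 0) :
    ∫ x in (0:ℝ)..(2 * Real.pi), trigSer b x = 0 := by
  simpa using trig_coef_pos b hb hb0 0

lemma trig_int_sq (b : ℕ → ℝ) (hb : Summable fun k => |b k|) (hb0 : b 0 = 0) :
    ∫ x in (0:ℝ)..(2 * Real.pi), trigSer b x * trigSer b x = 0 := by
  refine (trig_integral b hb (trigSer b) (trig_continuous b hb)).unique ?_
  convert hasSum_zero (α := ℂ) (β := ℕ) using 2 with k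
  simp_rw [mul_comm (Complex.exp _ ^ k)]
  rw [trig_coef_pos b hb hb0, mul_zero]

lemma int_conj (F : ℝ → ℂ) (s t : ℝ) :
    ∫ x in s..t, (starRingEnd ℂ) (F x) = (starRingEnd ℂ) (∫ x in s..t, F x) := by
  simp only [intervalIntegral, map_sub, integral_conj]

lemma parseval (b : ℕ → ℝ) (hb : Summable fun k => |b k|) :
    HasSum (fun k => 2 * Real.pi * b k ^ 2)
      (∫ x in (0:ℝ)..(2 * Real.pi), ‖trigSer b x‖ ^ 2) := by
  have hc := trig_continuous b hb
  have h := trig_integral b hb (fun x => (starRingEnd ℂ) (trigSer b x))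
    (Complex.continuous_conj.comp hc)
  rw [← Complex.hasSum_ofReal]
  convert h using 1
  · ext k
    have : (∫ x in (0:ℝ)..(2 * Real.pi),
        Complex.exp (x * Complex.I) ^ k * (starRingEnd ℂ) (trigSer b x)) = 2 * Real.pi * b k := by
      have h3 := congrArg (starRingEnd ℂ) (trig_coef_neg b hb k)
      rw [← int_conj] at h3
      simp only [map_mul, Complex.conj_ofReal, map_ofNat] at h3
      rw [← h3]
      congr 1; ext x
      rw [← Complex.exp_conj, expz_pow, mul_comm]
      congr 2
      simp
    rw [this]; push_cast; ring
  · rw [← intervalIntegral.integral_ofReal]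
    congr 1; ext x
    rw [Complex.mul_conj, Complex.normSq_eq_norm_sq]

lemma re_trig (a : ℕ → ℝ) (ha : Summable fun k : ℕ => |a (k + 1)|) (x : ℝ) :
    (trigSer (fun k => PowerSeries.coeff k (cepSeries a)) x).re =
      ∑' k : ℕ, a (k + 1) * Real.cos (((k : ℝ) + 1) * x) := by
  have h := Complex.hasSum_re (trig_hasSum _ (cep_summable a ha) x)
  rw [← h.tsum_eq, h.summable.tsum_eq_zero_add, cep_coeff_zero]
  simp only [cep_coeff_succ]
  simp only [Complex.ofReal_zero, zero_mul, Complex.zero_re, zero_add]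
  refine tsum_congr fun k => ?_
  rw [Complex.re_ofReal_mul, ← Complex.exp_nat_mul]
  congr 1
  rw [show ((k + 1 : ℕ) : ℂ) * (x * Complex.I) = ((((k : ℝ) + 1) * x : ℝ) : ℂ) * Complex.I by
    push_cast; ring, Complex.exp_ofReal_mul_I_re]

lemma im_re_bound (b : ℕ → ℝ) (hb : Summable fun k => |b k|) (hb0 : b 0 = 0) (d : ℝ) :
    ∫ x in (0:ℝ)..(2 * Real.pi), (trigSer b x).im ^ 2 ≤
      ∫ x in (0:ℝ)..(2 * Real.pi), (d + 2 * (trigSer b x).re) ^ 2 := by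
  have hc := trig_continuous b hb
  have hre : Continuous fun x => (trigSer b x).re := Complex.continuous_re.comp hc
  have him : Continuous fun x => (trigSer b x).im := Complex.continuous_im.comp hc
  have hcomm : ∀ F : ℝ → ℂ, Continuous F →
      ∫ x in (0:ℝ)..(2 * Real.pi), (F x).re = (∫ x in (0:ℝ)..(2 * Real.pi), F x).re := by
    intro F hF
    exact Complex.reCLM.intervalIntegral_comp_comm (hF.intervalIntegrable _ _)
  have h1 := hcomm _ hc
  rw [trig_int_zero b hb hb0] at h1
  have h2 := hcomm (fun x => trigSer b x * trigSer b x) (hc.mul hc)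
  rw [trig_int_sq b hb hb0] at h2
  rw [← sub_nonneg, ← intervalIntegral.integral_sub
    ((by fun_prop : Continuous _).intervalIntegrable _ _)
    ((by fun_prop : Continuous _).intervalIntegrable _ _)]
  have h3 : ∫ x in (0:ℝ)..(2 * Real.pi),
      ((d + 2 * (trigSer b x).re) ^ 2 - (trigSer b x).im ^ 2) =
      ∫ x in (0:ℝ)..(2 * Real.pi), ((d ^ 2 + 3 * (trigSer b x).re ^ 2) +
        (4 * d * (trigSer b x).re + (trigSer b x * trigSer b x).re)) := by
    congr 1; ext x
    rw [Complex.mul_re]; ring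
  have hre2 : Continuous fun x => (trigSer b x * trigSer b x).re :=
    Complex.continuous_re.comp (hc.mul hc)
  rw [h3, intervalIntegral.integral_add
    ((by fun_prop : Continuous _).intervalIntegrable _ _)
    ((by fun_prop : Continuous _).intervalIntegrable _ _),
    intervalIntegral.integral_add (f := fun x => 4 * d * (trigSer b x).re)
    ((by fun_prop : Continuous _).intervalIntegrable _ _)
    (hre2.intervalIntegrable _ _), h2, intervalIntegral.integral_const_mul, h1]
  simp only [Complex.zero_re, mul_zero, add_zero]
  exact intervalIntegral.integral_nonneg (by positivity) fun x _ => by positivity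

lemma norm_ineq (s t : ℝ) (hs : 0 ≤ s) (ht : 0 ≤ t) (u v : ℂ) :
    ‖(s : ℂ) * Complex.exp u - t * Complex.exp v‖ ^ 2 ≤
      (s * Real.exp u.re - t * Real.exp v.re) ^ 2 +
        (s * Real.exp u.re) * (t * Real.exp v.re) * (u.im - v.im) ^ 2 := by
  have hcos := Real.one_sub_sq_div_two_le_cos (x := u.im - v.im)
  rw [Real.cos_sub] at hcos
  have hp : 0 ≤ (s * Real.exp u.re) * (t * Real.exp v.re) := by positivity
  have h := mul_le_mul_of_nonneg_left hcos hp
  rw [← Complex.normSq_eq_norm_sq, Complex.normSq_apply]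
  simp only [Complex.sub_re, Complex.sub_im, Complex.re_ofReal_mul, Complex.im_ofReal_mul,
    Complex.exp_re, Complex.exp_im]
  have e1 := Real.sin_sq_add_cos_sq u.im
  have e2 := Real.sin_sq_add_cos_sq v.im
  generalize Real.exp u.re = p at *
  generalize Real.exp v.re = q at *
  generalize Real.sin u.im = su at *
  generalize Real.cos u.im = cu at *
  generalize Real.sin v.im = sv at *
  generalize Real.cos v.im = cv at *
  have : (s * (p * cu) - t * (q * cv)) * (s * (p * cu) - t * (q * cv)) +
    (s * (p * su) - t * (q * sv)) * (s * (p * su) - t * (q * sv)) =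
    (s * p) ^ 2 * (su ^ 2 + cu ^ 2) + (t * q) ^ 2 * (sv ^ 2 + cv ^ 2)
      - 2 * ((s * p) * (t * q) * (cu * cv + su * sv)) := by ring
  rw [this, e1, e2]
  linarith

/-- For absolutely summable cepstral coefficients `(a_k)`, `(â_k)` with associated spectral
densities `f, f̂`, innovation scales `σ, σ̂` and Wold coefficients `(c_k), (ĉ_k)` obtained by
the MA recursion,
`∑_{k=0}^∞ (σ c_k - σ̂ ĉ_k)² ≤ ∫₀^{2π} (√f - √f̂)² dλ
   + (sup_{λ ∈ [0,2π]} √(f f̂)) ∫₀^{2π} (log f - log f̂)² dλ`. -/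
theorem statement7 (a0 ahat0 : ℝ) (a ahat : ℕ → ℝ)
    (ha : Summable fun k : ℕ => |a (k + 1)|)
    (hahat : Summable fun k : ℕ => |ahat (k + 1)|)
    (c chat : ℕ → ℝ) (hc : IsMARecR a c) (hchat : IsMARecR ahat chat) :
    Summable (fun k : ℕ => (sigmaOf a0 * c k - sigmaOf ahat0 * chat k) ^ 2) ∧
    ∑' k : ℕ, (sigmaOf a0 * c k - sigmaOf ahat0 * chat k) ^ 2 ≤
      (∫ x in (0:ℝ)..(2 * Real.pi),
          (Real.sqrt (expSpec a0 a x) - Real.sqrt (expSpec ahat0 ahat x)) ^ 2) +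
        sSup ((fun x => Real.sqrt (expSpec a0 a x * expSpec ahat0 ahat x)) ''
            Set.Icc (0:ℝ) (2 * Real.pi)) *
          ∫ x in (0:ℝ)..(2 * Real.pi),
            (Real.log (expSpec a0 a x) - Real.log (expSpec ahat0 ahat x)) ^ 2 := by
  classical
  have hpi := Real.pi_pos
  set α : ℕ → ℝ := fun k => PowerSeries.coeff k (cepSeries a) with hα
  set β : ℕ → ℝ := fun k => PowerSeries.coeff k (cepSeries ahat) with hβ
  have hαs : Summable fun k => |α k| := cep_summable a ha
  have hβs : Summable fun k => |β k| := cep_summable ahat hahat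
  have hcs := ma_summable a c ha hc
  have hcs' := ma_summable ahat chat hahat hchat
  have lin : ∀ (s t : ℝ) (p q : ℕ → ℝ), (Summable fun k => |p k|) → (Summable fun k => |q k|) →
      (Summable fun k => |s * p k - t * q k|) ∧
      ∀ x, trigSer (fun k => s * p k - t * q k) x = s * trigSer p x - t * trigSer q x := by
    intro s t p q hp hq
    refine ⟨((hp.of_abs.mul_left s).sub (hq.of_abs.mul_left t)).abs, fun x => ?_⟩
    have h := ((trig_hasSum p hp x).mul_left (s : ℂ)).sub ((trig_hasSum q hq x).mul_left (t : ℂ))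
    rw [← h.tsum_eq]
    unfold trigSer
    refine tsum_congr fun k => ?_
    push_cast; ring
  set d : ℕ → ℝ := fun k => sigmaOf a0 * c k - sigmaOf ahat0 * chat k with hd
  obtain ⟨hds, hdt⟩ := lin (sigmaOf a0) (sigmaOf ahat0) c chat hcs hcs'
  obtain ⟨hγs, hγt⟩ := lin 1 1 α β hαs hβs
  set γ : ℕ → ℝ := fun k => 1 * α k - 1 * β k with hγ
  have hγ0 : γ 0 = 0 := by simp only [hγ, hα, hβ, cep_coeff_zero]; ring
  have hpar := parseval d hds
  have h2pi : (0:ℝ) < 2 * Real.pi := by positivity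
  have hsum : HasSum (fun k => d k ^ 2)
      ((∫ x in (0:ℝ)..(2 * Real.pi), ‖trigSer d x‖ ^ 2) / (2 * Real.pi)) := by
    have := hpar.div_const (2 * Real.pi)
    have e : (fun k => d k ^ 2) = fun k => 2 * Real.pi * d k ^ 2 / (2 * Real.pi) := by
      ext k; field_simp
    rw [e]; exact this
  refine ⟨hsum.summable, ?_⟩
  rw [hsum.tsum_eq, div_le_iff₀ h2pi]
  have hf : ∀ x, expSpec a0 a x = Real.exp (a0 + 2 * (trigSer α x).re) := by
    intro x; rw [hα, re_trig a ha]; rfl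
  have hg : ∀ x, expSpec ahat0 ahat x = Real.exp (ahat0 + 2 * (trigSer β x).re) := by
    intro x; rw [hβ, re_trig ahat hahat]; rfl
  have hαc := trig_continuous α hαs
  have hβc := trig_continuous β hβs
  have hγc := trig_continuous γ hγs
  have hdc := trig_continuous d hds
  have hαr : Continuous fun x => (trigSer α x).re := Complex.continuous_re.comp hαc
  have hβr : Continuous fun x => (trigSer β x).re := Complex.continuous_re.comp hβc
  have hγi : Continuous fun x => (trigSer γ x).im := Complex.continuous_im.comp hγc
  have hfc : Continuous (expSpec a0 a) := by
    rw [show expSpec a0 a = fun x => Real.exp (a0 + 2 * (trigSer α x).re) from funext hf]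
    fun_prop
  have hgc : Continuous (expSpec ahat0 ahat) := by
    rw [show expSpec ahat0 ahat = fun x => Real.exp (ahat0 + 2 * (trigSer β x).re) from funext hg]
    fun_prop
  have hlog : ∫ x in (0:ℝ)..(2 * Real.pi),
      (Real.log (expSpec a0 a x) - Real.log (expSpec ahat0 ahat x)) ^ 2 =
      ∫ x in (0:ℝ)..(2 * Real.pi), ((a0 - ahat0) + 2 * (trigSer γ x).re) ^ 2 := by
    congr 1; ext x
    rw [hf, hg, Real.log_exp, Real.log_exp, hγt x]
    simp only [Complex.ofReal_one, one_mul, Complex.sub_re]; ring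
  rw [hlog]
  have hb := im_re_bound γ hγs hγ0 (a0 - ahat0)
  set S := sSup ((fun x => Real.sqrt (expSpec a0 a x * expSpec ahat0 ahat x)) ''
            Set.Icc (0:ℝ) (2 * Real.pi)) with hS
  have hSle : ∀ x ∈ Set.Icc (0:ℝ) (2 * Real.pi),
      Real.sqrt (expSpec a0 a x * expSpec ahat0 ahat x) ≤ S := by
    intro x hx
    refine le_csSup ?_ (Set.mem_image_of_mem _ hx)
    exact (isCompact_Icc.image (by fun_prop)).bddAbove
  have hS0 : 0 ≤ S := (Real.sqrt_nonneg _).trans (hSle 0 ⟨le_rfl, h2pi.le⟩)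
  have key : ∀ (s0 w : ℝ), sigmaOf s0 * Real.exp w =
      Real.sqrt (2 * Real.pi) * Real.sqrt (Real.exp (s0 + 2 * w)) := by
    intro s0 w
    rw [sigmaOf, Real.sqrt_mul h2pi.le, Real.exp_add, Real.sqrt_mul (Real.exp_pos _).le,
      show Real.exp (2 * w) = Real.exp w ^ 2 by rw [← Real.exp_nat_mul]; norm_num,
      Real.sqrt_sq (Real.exp_pos _).le, mul_assoc]
  have hpt : ∀ x ∈ Set.Icc (0:ℝ) (2 * Real.pi), ‖trigSer d x‖ ^ 2 ≤
      (2 * Real.pi) * ((Real.sqrt (expSpec a0 a x) - Real.sqrt (expSpec ahat0 ahat x)) ^ 2 +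
        S * (trigSer γ x).im ^ 2) := by
    intro x hx
    rw [hdt x, ma_exp a c ha hc, ma_exp ahat chat hahat hchat]
    refine (norm_ineq (sigmaOf a0) (sigmaOf ahat0) (Real.sqrt_nonneg _) (Real.sqrt_nonneg _)
      _ _).trans ?_
    have h1 := hSle x hx
    rw [key, key]
    change (_ * Real.sqrt (Real.exp (a0 + 2 * (trigSer α x).re)) -
      _ * Real.sqrt (Real.exp (ahat0 + 2 * (trigSer β x).re))) ^ 2 +
      (_ * Real.sqrt (Real.exp (a0 + 2 * (trigSer α x).re))) *
      (_ * Real.sqrt (Real.exp (ahat0 + 2 * (trigSer β x).re))) *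
      ((trigSer α x).im - (trigSer β x).im) ^ 2 ≤ _
    rw [← hf, ← hg]
    have hf0 : 0 ≤ expSpec a0 a x := by rw [hf]; positivity
    rw [Real.sqrt_mul hf0] at h1
    have hi : (trigSer γ x).im = (trigSer α x).im - (trigSer β x).im := by
      rw [hγt x]; simp
    rw [hi]
    have h2 := mul_le_mul_of_nonneg_right h1 (sq_nonneg ((trigSer α x).im - (trigSer β x).im))
    have h3 := mul_le_mul_of_nonneg_left h2 h2pi.le
    have h4 := Real.sq_sqrt h2pi.le
    generalize Real.sqrt (2 * Real.pi) = r at *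
    rw [← h4] at h3 ⊢
    nlinarith [h3]
  calc _ ≤ ∫ x in (0:ℝ)..(2 * Real.pi),
      (2 * Real.pi) * ((Real.sqrt (expSpec a0 a x) - Real.sqrt (expSpec ahat0 ahat x)) ^ 2 +
        S * (trigSer γ x).im ^ 2) :=
        intervalIntegral.integral_mono_on h2pi.le
          ((by fun_prop : Continuous _).intervalIntegrable _ _)
          ((by fun_prop : Continuous _).intervalIntegrable _ _) hpt
    _ ≤ _ := by
      rw [intervalIntegral.integral_const_mul, intervalIntegral.integral_add
          ((by fun_prop : Continuous _).intervalIntegrable _ _)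
          ((by fun_prop : Continuous _).intervalIntegrable _ _),
        intervalIntegral.integral_const_mul, mul_comm]
      gcongr
end

section
/- Let f : ℝ → ℝ be a 2π-periodic, even, continuously differentiable function with 0 < m ≤ f(λ) ≤ M for all λ, and let f_n : ℝ → ℝ (n ∈ ℕ) be 2π-periodic, even, continuously differentiable functions with C₁ ≤ f_n(λ) ≤ C₂ for all λ and n, where 0 < C₁ < C₂ < ∞. Suppose sup_{λ∈[−π,π]} |f_n(λ) − f(λ)| → 0 and sup_{λ∈[−π,π]} |f_n′(λ) − f′(λ)| → 0 as n → ∞. Let a_k := a_k(log f) and â_{k,n} := a_k(log f_n) (real since f, f_n are even), and let (c_k), (ĉ_{k,n}) be obtained from (a_k)_{k≥1}, (â_{k,n})_{k≥1} by the MA recursion. Then Σ_{k=0}^∞ k² (ĉ_{k,n} − c_k)² → 0 and Σ_{k=0}^∞ |ĉ_{k,n} − c_k| → 0 as n → ∞. -/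
open MeasureTheory Filter Topology

lemma conv_le (x y : ℕ → ℝ) (hx : ∀ k, 0 ≤ x k) (hy : ∀ k, 0 ≤ y k) (N : ℕ) :
    ∑ k ∈ Finset.range N, ∑ j ∈ Finset.range (k + 1), x (k - j) * y j ≤
      (∑ k ∈ Finset.range N, x k) * (∑ k ∈ Finset.range N, y k) := by
  rw [Finset.sum_range_diag_flip N (fun j i => x i * y j), mul_comm, Finset.sum_mul]
  refine Finset.sum_le_sum fun j _ => ?_
  rw [← Finset.sum_mul, mul_comm]
  refine mul_le_mul_of_nonneg_left ?_ (hy j)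
  exact Finset.sum_le_sum_of_subset_of_nonneg
    (Finset.range_mono (Nat.sub_le _ _)) (fun i _ _ => hx i)

lemma young_le (x y : ℕ → ℝ) (N : ℕ) :
    ∑ k ∈ Finset.range N, (∑ j ∈ Finset.range (k + 1), x (k - j) * y j) ^ 2 ≤
      (∑ k ∈ Finset.range N, x k ^ 2) * (∑ k ∈ Finset.range N, |y k|) ^ 2 := by
  have h1 : ∀ k ∈ Finset.range N, (∑ j ∈ Finset.range (k + 1), x (k - j) * y j) ^ 2 ≤
      (∑ k ∈ Finset.range N, |y k|) * ∑ j ∈ Finset.range (k + 1), x (k - j) ^ 2 * |y j| := by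
    intro k hk
    have hk' : k + 1 ≤ N := by simpa using hk
    have cs := Finset.sum_sq_le_sum_mul_sum_of_sq_le_mul (Finset.range (k + 1))
      (r := fun j => x (k - j) * y j) (f := fun j => |y j|) (g := fun j => x (k - j) ^ 2 * |y j|)
      (fun i _ => abs_nonneg _) (fun i _ => by positivity)
      (fun i _ => le_of_eq (by rw [mul_pow, ← sq_abs (y i)]; ring))
    refine cs.trans (mul_le_mul_of_nonneg_right ?_
      (Finset.sum_nonneg fun i _ => by positivity))
    exact Finset.sum_le_sum_of_subset_of_nonneg (Finset.range_mono hk') (fun i _ _ => abs_nonneg _)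
  refine (Finset.sum_le_sum h1).trans ?_
  rw [← Finset.mul_sum]
  have h2 := conv_le (fun k => x k ^ 2) (fun k => |y k|) (fun k => sq_nonneg _)
    (fun k => abs_nonneg _) N
  have h3 : 0 ≤ ∑ k ∈ Finset.range N, |y k| := Finset.sum_nonneg fun i _ => abs_nonneg _
  nlinarith [mul_le_mul_of_nonneg_left h2 h3]

lemma gron (p β φ : ℕ → ℝ) (hp : ∀ k, 0 ≤ p k) (hβ : ∀ k, 0 ≤ β k) (hφ : ∀ k, 0 ≤ φ k)
    (h : ∀ k : ℕ, ((k : ℝ) + 1) * p (k + 1) ≤ ((k : ℝ) + 1) * φ k +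
      ∑ j ∈ Finset.range (k + 1), (((k - j : ℕ) : ℝ) + 1) * β (k - j) * p j) (N : ℕ) :
    ∑ k ∈ Finset.range (N + 1), p k ≤
      (p 0 + ∑ k ∈ Finset.range N, φ k) * Real.exp (∑ k ∈ Finset.range N, β k) := by
  set P : ℝ → ℝ := fun r => p 0 + ∑ k ∈ Finset.range N, p (k + 1) * r ^ (k + 1) with hP
  set Q : ℝ → ℝ := fun r => ∑ k ∈ Finset.range N, β k * r ^ (k + 1) with hQ
  set F : ℝ → ℝ := fun r => ∑ k ∈ Finset.range N, φ k * r ^ (k + 1) with hF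
  have dsum : ∀ (u : ℕ → ℝ) (r : ℝ), HasDerivAt
      (fun r : ℝ => ∑ k ∈ Finset.range N, u k * r ^ (k + 1))
      (∑ k ∈ Finset.range N, ((k : ℝ) + 1) * u k * r ^ k) r := by
    intro u r
    refine HasDerivAt.fun_sum fun k _ => ?_
    have := (hasDerivAt_pow (k + 1) r).const_mul (u k)
    refine this.congr_deriv ?_
    push_cast
    ring
  have dG : ∀ r, HasDerivAt (fun r => F r - P r * Real.exp (-Q r))
      ((∑ k ∈ Finset.range N, ((k : ℝ) + 1) * φ k * r ^ k) -
        ((∑ k ∈ Finset.range N, ((k : ℝ) + 1) * p (k + 1) * r ^ k) * Real.exp (-Q r) +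
        P r * (Real.exp (-Q r) * -(∑ k ∈ Finset.range N, ((k : ℝ) + 1) * β k * r ^ k)))) r := by
    intro r
    exact (dsum φ r).sub (((dsum (fun k => p (k + 1)) r).const_add (p 0)).mul ((dsum β r).neg.exp))
  have mono : MonotoneOn (fun r => F r - P r * Real.exp (-Q r)) (Set.Icc 0 1) := by
    refine monotoneOn_of_deriv_nonneg (convex_Icc 0 1)
      (fun r _ => (dG r).continuousAt.continuousWithinAt)
      (fun r _ => (dG r).differentiableAt.differentiableWithinAt) ?_
    intro r hr
    rw [interior_Icc] at hr
    have hr0 : 0 ≤ r := hr.1.le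
    rw [(dG r).deriv]
    set F' := ∑ k ∈ Finset.range N, ((k : ℝ) + 1) * φ k * r ^ k with hF'
    set P' := ∑ k ∈ Finset.range N, ((k : ℝ) + 1) * p (k + 1) * r ^ k with hP'
    set Q' := ∑ k ∈ Finset.range N, ((k : ℝ) + 1) * β k * r ^ k with hQ'
    have hF0 : 0 ≤ F' := Finset.sum_nonneg fun k _ => by have := hφ k; positivity
    have hQ0 : 0 ≤ Q' := Finset.sum_nonneg fun k _ => by have := hβ k; positivity
    have hQ1 : 0 ≤ Q r := Finset.sum_nonneg fun k _ => by have := hβ k; positivity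
    have key : P' ≤ F' + Q' * P r := by
      have h1 : P' ≤ F' + ∑ k ∈ Finset.range N, ∑ j ∈ Finset.range (k + 1),
          ((((k - j : ℕ) : ℝ) + 1) * β (k - j) * r ^ (k - j)) * (p j * r ^ j) := by
        rw [hF', hP', ← Finset.sum_add_distrib]
        refine Finset.sum_le_sum fun k _ => ?_
        have := mul_le_mul_of_nonneg_right (h k) (pow_nonneg hr0 k)
        refine this.trans (le_of_eq ?_)
        rw [add_mul, Finset.sum_mul]
        congr 1
        refine Finset.sum_congr rfl fun j hj => ?_
        have hj' : j ≤ k := by simpa [Nat.lt_succ_iff] using hj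
        have : r ^ k = r ^ (k - j) * r ^ j := by rw [← pow_add, Nat.sub_add_cancel hj']
        rw [this]; ring
      have h2 := conv_le (fun k => ((k : ℝ) + 1) * β k * r ^ k) (fun k => p k * r ^ k)
        (fun k => by have := hβ k; positivity) (fun k => by have := hp k; positivity) N
      have h3 : ∑ k ∈ Finset.range N, p k * r ^ k ≤ P r := by
        have : P r = ∑ k ∈ Finset.range (N + 1), p k * r ^ k := by
          rw [Finset.sum_range_succ']; simp [hP]; ring
        rw [this]
        exact Finset.sum_le_sum_of_subset_of_nonneg (Finset.range_mono (Nat.le_succ _))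
          (fun k _ _ => by have := hp k; positivity)
      have h4 := mul_le_mul_of_nonneg_left h3 hQ0
      linarith
    have he : Real.exp (-Q r) ≤ 1 := Real.exp_le_one_iff.mpr (by linarith)
    have he0 := Real.exp_pos (-Q r)
    nlinarith [mul_le_mul_of_nonneg_right key he0.le, mul_le_mul_of_nonneg_left he hF0]
  have h01 := mono (by simp) (by simp) (zero_le_one : (0 : ℝ) ≤ 1)
  have e0 : P 0 = p 0 := by simp [hP]
  have e1 : Q 0 = 0 := by simp [hQ]
  have e2 : F 0 = 0 := by simp [hF]
  have e3 : P 1 = ∑ k ∈ Finset.range (N + 1), p k := by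
    rw [Finset.sum_range_succ']; simp [hP]; ring
  have e4 : Q 1 = ∑ k ∈ Finset.range N, β k := by simp [hQ]
  have e5 : F 1 = ∑ k ∈ Finset.range N, φ k := by simp [hF]
  simp only [e0, e1, e2, e3, e4, e5, neg_zero, Real.exp_zero] at h01
  rw [Real.exp_neg] at h01
  have hE := Real.exp_pos (∑ k ∈ Finset.range N, β k)
  rw [← div_le_iff₀ hE, div_eq_mul_inv]
  linarith

lemma ma_rec {a c : ℕ → ℝ} (h : IsMARecR a c) (k : ℕ) :
    ((k : ℝ) + 1) * c (k + 1) =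
      ∑ j ∈ Finset.range (k + 1), (((k - j : ℕ) : ℝ) + 1) * a (k - j + 1) * c j := by
  rw [h.2 k, Finset.mul_sum]
  refine Finset.sum_congr rfl fun j hj => ?_
  have hj' : j ≤ k := by simpa [Nat.lt_succ_iff] using hj
  have : k + 1 - j = k - j + 1 := by omega
  rw [this, Nat.cast_sub hj']
  have : (k : ℝ) + 1 ≠ 0 := by positivity
  field_simp
  ring

lemma ma_l1 {a c : ℕ → ℝ} (h : IsMARecR a c) (N : ℕ) :
    ∑ k ∈ Finset.range N, |c k| ≤ Real.exp (∑ k ∈ Finset.range N, |a (k + 1)|) := by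
  have := gron (fun k => |c k|) (fun k => |a (k + 1)|) (fun _ => 0) (fun _ => abs_nonneg _)
    (fun _ => abs_nonneg _) (fun _ => le_rfl) (by
      intro k
      rw [mul_zero, zero_add]
      have h1 : ((k : ℝ) + 1) * |c (k + 1)| = |((k : ℝ) + 1) * c (k + 1)| := by
        rw [abs_mul, abs_of_nonneg (by positivity : (0 : ℝ) ≤ (k : ℝ) + 1)]
      rw [h1, ma_rec h]
      refine (Finset.abs_sum_le_sum_abs _ _).trans (le_of_eq ?_)
      refine Finset.sum_congr rfl fun j _ => ?_
      rw [abs_mul, abs_mul, abs_of_nonneg (by positivity : (0 : ℝ) ≤ ((k - j : ℕ) : ℝ) + 1)]) N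
  simp only [h.1, abs_one, Finset.sum_const_zero, add_zero, one_mul] at this
  rw [Finset.sum_range_succ] at this
  linarith [abs_nonneg (c N)]

lemma ma_diff {a c b e : ℕ → ℝ} (h : IsMARecR a c) (h' : IsMARecR b e) (k : ℕ) :
    ((k : ℝ) + 1) * (e (k + 1) - c (k + 1)) =
      (∑ j ∈ Finset.range (k + 1),
        ((((k - j : ℕ) : ℝ) + 1) * (b (k - j + 1) - a (k - j + 1))) * e j) +
      ∑ j ∈ Finset.range (k + 1),
        ((((k - j : ℕ) : ℝ) + 1) * a (k - j + 1)) * (e j - c j) := by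
  rw [mul_sub, ma_rec h, ma_rec h', ← Finset.sum_sub_distrib, ← Finset.sum_add_distrib]
  refine Finset.sum_congr rfl fun j _ => ?_
  ring

lemma ma_diff_l1 {a c b e : ℕ → ℝ} (h : IsMARecR a c) (h' : IsMARecR b e) (N : ℕ) :
    ∑ k ∈ Finset.range N, |e k - c k| ≤
      ((∑ k ∈ Finset.range N, |b (k + 1) - a (k + 1)|) * ∑ k ∈ Finset.range N, |e k|) *
        Real.exp (∑ k ∈ Finset.range N, |a (k + 1)|) := by
  have := gron (fun k => |e k - c k|) (fun k => |a (k + 1)|)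
    (fun k => ∑ j ∈ Finset.range (k + 1), |b (k - j + 1) - a (k - j + 1)| * |e j|)
    (fun _ => abs_nonneg _)
    (fun _ => abs_nonneg _) (fun _ => Finset.sum_nonneg fun j _ => by positivity) (by
      intro k
      have h1 : ((k : ℝ) + 1) * |e (k + 1) - c (k + 1)| =
          |((k : ℝ) + 1) * (e (k + 1) - c (k + 1))| := by
        rw [abs_mul, abs_of_nonneg (by positivity : (0 : ℝ) ≤ (k : ℝ) + 1)]
      rw [h1, ma_diff h h']
      refine (abs_add_le _ _).trans (add_le_add ?_ ?_)
      · refine (Finset.abs_sum_le_sum_abs _ _).trans ?_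
        rw [Finset.mul_sum]
        refine Finset.sum_le_sum fun j _ => ?_
        rw [abs_mul, abs_mul, abs_of_nonneg (by positivity : (0 : ℝ) ≤ ((k - j : ℕ) : ℝ) + 1),
          mul_assoc]
        refine mul_le_mul_of_nonneg_right ?_ (by positivity)
        have : ((k - j : ℕ) : ℝ) ≤ k := by exact_mod_cast Nat.sub_le k j
        linarith
      · refine (Finset.abs_sum_le_sum_abs _ _).trans (le_of_eq ?_)
        refine Finset.sum_congr rfl fun j _ => ?_
        rw [abs_mul, abs_mul, abs_of_nonneg (by positivity : (0 : ℝ) ≤ ((k - j : ℕ) : ℝ) + 1)]) N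
  simp only [h.1, h'.1, sub_self, abs_zero, zero_add] at this
  rw [Finset.sum_range_succ] at this
  have h2 := conv_le (fun k => |b (k + 1) - a (k + 1)|) (fun k => |e k|)
    (fun _ => abs_nonneg _) (fun _ => abs_nonneg _) N
  have h3 := mul_le_mul_of_nonneg_right h2
    (Real.exp_pos (∑ k ∈ Finset.range N, |a (k + 1)|)).le
  linarith [abs_nonneg (e N - c N)]

lemma ma_diff_l2 {a c b e : ℕ → ℝ} (h : IsMARecR a c) (h' : IsMARecR b e) (N : ℕ) :
    ∑ k ∈ Finset.range N, (k : ℝ) ^ 2 * (e k - c k) ^ 2 ≤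
      2 * ((∑ k ∈ Finset.range N, (((k : ℝ) + 1) * (b (k + 1) - a (k + 1))) ^ 2) *
        (∑ k ∈ Finset.range N, |e k|) ^ 2 +
       (∑ k ∈ Finset.range N, (((k : ℝ) + 1) * a (k + 1)) ^ 2) *
        (∑ k ∈ Finset.range N, |e k - c k|) ^ 2) := by
  have y1 := young_le (fun k => ((k : ℝ) + 1) * (b (k + 1) - a (k + 1))) e N
  have y2 := young_le (fun k => ((k : ℝ) + 1) * a (k + 1)) (fun k => e k - c k) N
  have h1 : ∑ k ∈ Finset.range N, (k : ℝ) ^ 2 * (e k - c k) ^ 2 ≤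
      ∑ k ∈ Finset.range (N + 1), (k : ℝ) ^ 2 * (e k - c k) ^ 2 :=
    Finset.sum_le_sum_of_subset_of_nonneg (Finset.range_mono (Nat.le_succ _))
      (fun k _ _ => by positivity)
  rw [Finset.sum_range_succ'] at h1
  simp only [Nat.cast_zero, ne_eq, OfNat.ofNat_ne_zero, not_false_eq_true, zero_pow, zero_mul,
    add_zero] at h1
  refine h1.trans ?_
  refine le_trans ?_ (mul_le_mul_of_nonneg_left (add_le_add y1 y2) (by norm_num))
  rw [← Finset.sum_add_distrib, Finset.mul_sum]
  refine Finset.sum_le_sum fun k _ => ?_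
  rw [← mul_pow]
  push_cast
  rw [ma_diff h h']
  exact add_sq_le

lemma l1_of_l2 (d : ℕ → ℝ) (N : ℕ) (ε : ℝ) (hε : 0 ≤ ε)
    (h : ∑ k ∈ Finset.range N, (((k : ℝ) + 1) * d k) ^ 2 ≤ ε ^ 2) :
    ∑ k ∈ Finset.range N, |d k| ≤ 2 * ε := by
  have cs := Finset.sum_mul_sq_le_sq_mul_sq (Finset.range N)
    (fun k => 1 / ((k : ℝ) + 1)) (fun k => ((k : ℝ) + 1) * |d k|)
  have e1 : ∑ k ∈ Finset.range N, 1 / ((k : ℝ) + 1) * (((k : ℝ) + 1) * |d k|) =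
      ∑ k ∈ Finset.range N, |d k| := by
    refine Finset.sum_congr rfl fun k _ => ?_
    have : (k : ℝ) + 1 ≠ 0 := by positivity
    field_simp
  have e2 : ∑ k ∈ Finset.range N, (((k : ℝ) + 1) * |d k|) ^ 2 ≤ ε ^ 2 := by
    simpa only [mul_pow, sq_abs] using h
  have e3 : ∀ N : ℕ, ∑ k ∈ Finset.range N, (1 / ((k : ℝ) + 1)) ^ 2 ≤ 4 - 2 / ((N : ℝ) + 1) := by
    intro N
    induction N with
    | zero => norm_num
    | succ n ih =>
      rw [Finset.sum_range_succ]
      have hn : (0 : ℝ) < (n : ℝ) + 1 := by positivity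
      have hn2 : (0 : ℝ) < (n : ℝ) + 1 + 1 := by positivity
      push_cast
      have : (1 / ((n : ℝ) + 1)) ^ 2 ≤ 2 / ((n : ℝ) + 1) - 2 / ((n : ℝ) + 1 + 1) := by
        rw [div_sub_div _ _ hn.ne' hn2.ne', div_pow, div_le_div_iff₀ (by positivity) (by positivity)]
        have h0 : (0 : ℝ) ≤ n := Nat.cast_nonneg n
        nlinarith [mul_nonneg h0 h0]
      linarith
  have e4 : ∑ k ∈ Finset.range N, (1 / ((k : ℝ) + 1)) ^ 2 ≤ 4 := by
    have := e3 N
    have : 0 ≤ 2 / ((N : ℝ) + 1) := by positivity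
    linarith
  rw [e1] at cs
  refine abs_le_of_sq_le_sq' ?_ (by positivity) |>.2
  refine cs.trans ?_
  calc _ ≤ 4 * ε ^ 2 := mul_le_mul e4 e2 (Finset.sum_nonneg fun k _ => sq_nonneg _) (by norm_num)
    _ = _ := by ring

lemma sin_orth (j k : ℕ) :
    ∫ x in (-Real.pi)..Real.pi, Real.sin (((j : ℝ) + 1) * x) * Real.sin (((k : ℝ) + 1) * x) =
      if j = k then Real.pi else 0 := by
  have hcos : ∀ z : ℤ, z ≠ 0 → ∫ x in (-Real.pi)..Real.pi, Real.cos ((z : ℝ) * x) = 0 := by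
    intro z hz
    have hz' : (z : ℝ) ≠ 0 := by exact_mod_cast hz
    rw [intervalIntegral.integral_comp_mul_left _ hz', integral_cos]
    simp [Real.sin_int_mul_pi]
  have e1 : ∀ x : ℝ, Real.sin (((j : ℝ) + 1) * x) * Real.sin (((k : ℝ) + 1) * x) =
      (Real.cos ((((j : ℤ) - (k : ℤ) : ℤ) : ℝ) * x) -
        Real.cos ((((j : ℤ) + (k : ℤ) + 2 : ℤ) : ℝ) * x)) / 2 := by
    intro x
    have a1 : (((j : ℤ) - (k : ℤ) : ℤ) : ℝ) * x = ((j : ℝ) + 1) * x - ((k : ℝ) + 1) * x := by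
      push_cast; ring
    have a2 : (((j : ℤ) + (k : ℤ) + 2 : ℤ) : ℝ) * x = ((j : ℝ) + 1) * x + ((k : ℝ) + 1) * x := by
      push_cast; ring
    rw [a1, a2, Real.cos_sub, Real.cos_add]; ring
  simp only [e1]
  rw [intervalIntegral.integral_div, intervalIntegral.integral_sub
    ((by fun_prop : Continuous _).intervalIntegrable _ _)
    ((by fun_prop : Continuous _).intervalIntegrable _ _), hcos ((j : ℤ) + (k : ℤ) + 2) (by omega)]
  split_ifs with hjk
  · subst hjk
    simp
  · rw [hcos _ (by omega)]; simp

lemma bessel (h : ℝ → ℝ) (hc : Continuous h) (N : ℕ) :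
    ∑ k ∈ Finset.range N, (∫ x in (-Real.pi)..Real.pi, h x * Real.sin (((k : ℝ) + 1) * x)) ^ 2 ≤
      Real.pi * ∫ x in (-Real.pi)..Real.pi, h x ^ 2 := by
  set s : ℕ → ℝ := fun k => ∫ x in (-Real.pi)..Real.pi, h x * Real.sin (((k : ℝ) + 1) * x) with hs
  set T : ℝ → ℝ := fun x => ∑ k ∈ Finset.range N, s k * Real.sin (((k : ℝ) + 1) * x) with hT
  have hTc : Continuous T := by fun_prop
  have i1 : ∫ x in (-Real.pi)..Real.pi, h x * T x = ∑ k ∈ Finset.range N, s k ^ 2 := by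
    simp only [hT, Finset.mul_sum]
    rw [intervalIntegral.integral_finsetSum
      (fun k _ => (by fun_prop : Continuous _).intervalIntegrable _ _)]
    refine Finset.sum_congr rfl fun k _ => ?_
    rw [sq]
    nth_rewrite 2 [hs]
    rw [← intervalIntegral.integral_const_mul]
    congr 1; ext x; ring
  have i2 : ∫ x in (-Real.pi)..Real.pi, T x * T x =
      Real.pi * ∑ k ∈ Finset.range N, s k ^ 2 := by
    simp only [hT, Finset.sum_mul_sum]
    rw [intervalIntegral.integral_finsetSum
      (fun k _ => (by fun_prop : Continuous _).intervalIntegrable _ _), Finset.mul_sum]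
    refine Finset.sum_congr rfl fun k hk => ?_
    rw [intervalIntegral.integral_finsetSum
      (fun k _ => (by fun_prop : Continuous _).intervalIntegrable _ _)]
    have : ∀ j ∈ Finset.range N, (∫ x in (-Real.pi)..Real.pi,
        s k * Real.sin (((k : ℝ) + 1) * x) * (s j * Real.sin (((j : ℝ) + 1) * x))) =
        if k = j then Real.pi * s k ^ 2 else 0 := by
      intro j _
      have : ∀ x : ℝ, s k * Real.sin (((k : ℝ) + 1) * x) * (s j * Real.sin (((j : ℝ) + 1) * x)) =
        (s k * s j) * (Real.sin (((k : ℝ) + 1) * x) * Real.sin (((j : ℝ) + 1) * x)) := by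
        intro x; ring
      simp only [this]
      rw [intervalIntegral.integral_const_mul, sin_orth]
      split_ifs with hkj
      · subst hkj; ring
      · simp
    rw [Finset.sum_congr rfl this, Finset.sum_ite_eq, if_pos hk]
  have hpi := Real.pi_pos
  have pos : 0 ≤ ∫ x in (-Real.pi)..Real.pi, (Real.pi * h x - T x) ^ 2 :=
    intervalIntegral.integral_nonneg (by linarith) (fun x _ => sq_nonneg _)
  have ex : ∀ x, (Real.pi * h x - T x) ^ 2 =
      Real.pi ^ 2 * h x ^ 2 - 2 * Real.pi * (h x * T x) + T x * T x := by intro x; ring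
  simp only [ex] at pos
  rw [intervalIntegral.integral_add ((by fun_prop : Continuous _).intervalIntegrable _ _)
    ((by fun_prop : Continuous _).intervalIntegrable _ _),
    intervalIntegral.integral_sub ((by fun_prop : Continuous _).intervalIntegrable _ _)
    ((by fun_prop : Continuous _).intervalIntegrable _ _),
    intervalIntegral.integral_const_mul, intervalIntegral.integral_const_mul, i1, i2] at pos
  have : 0 ≤ Real.pi * (Real.pi * (∫ x in (-Real.pi)..Real.pi, h x ^ 2) -
      ∑ k ∈ Finset.range N, s k ^ 2) := by linarith
  have := nonneg_of_mul_nonneg_right this hpi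
  linarith

/-- weighted ℓ² bound for cosine coefficients of a C¹ function. -/
lemma coef_l2 (g h : ℝ → ℝ) (hg : ∀ x, HasDerivAt g (h x) x) (hc : Continuous h) (ε : ℝ)
    (hε : ∀ x ∈ Set.Icc (-Real.pi) Real.pi, |h x| ≤ ε) (N : ℕ) :
    ∑ k ∈ Finset.range N, (((k : ℝ) + 1) * cosFourierCoef g (k + 1)) ^ 2 ≤ ε ^ 2 := by
  have hpi := Real.pi_pos
  have ibp : ∀ k : ℕ, ((k : ℝ) + 1) * cosFourierCoef g (k + 1) =
      -(1 / (2 * Real.pi)) * ∫ x in (-Real.pi)..Real.pi, h x * Real.sin (((k : ℝ) + 1) * x) := by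
    intro k
    have hk : (k : ℝ) + 1 ≠ 0 := by positivity
    have d : ∀ x : ℝ, HasDerivAt (fun x => Real.sin (((k : ℝ) + 1) * x))
        (((k : ℝ) + 1) * Real.cos (((k : ℝ) + 1) * x)) x := by
      intro x
      have := ((hasDerivAt_id x).const_mul ((k : ℝ) + 1)).sin
      refine this.congr_deriv ?_
      simp; ring
    have := intervalIntegral.integral_mul_deriv_eq_deriv_mul (a := -Real.pi) (b := Real.pi)
      (u := g) (v := fun x => Real.sin (((k : ℝ) + 1) * x))
      (fun x _ => hg x) (fun x _ => d x) (hc.intervalIntegrable _ _)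
      ((by fun_prop : Continuous _).intervalIntegrable _ _)
    have s1 : Real.sin (((k : ℝ) + 1) * Real.pi) = 0 := by
      exact_mod_cast Real.sin_nat_mul_pi (k + 1)
    have s2 : Real.sin (((k : ℝ) + 1) * -Real.pi) = 0 := by
      rw [mul_neg, Real.sin_neg, s1, neg_zero]
    rw [s1, s2] at this
    have e : ∀ x : ℝ, g x * (((k : ℝ) + 1) * Real.cos (((k : ℝ) + 1) * x)) =
        ((k : ℝ) + 1) * (g x * Real.cos (((k : ℝ) + 1) * x)) := by intro x; ring
    simp only [e] at this
    rw [intervalIntegral.integral_const_mul] at this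
    unfold cosFourierCoef
    push_cast
    linear_combination (1 / (2 * Real.pi)) * this
  simp only [ibp, mul_pow]
  rw [← Finset.mul_sum]
  have b := bessel h hc N
  have i : ∫ x in (-Real.pi)..Real.pi, h x ^ 2 ≤ ∫ x in (-Real.pi)..Real.pi, ε ^ 2 := by
    refine intervalIntegral.integral_mono_on (by linarith)
      ((by fun_prop : Continuous _).intervalIntegrable _ _)
      ((by fun_prop : Continuous _).intervalIntegrable _ _) fun x hx => ?_
    rw [← sq_abs]
    exact pow_le_pow_left₀ (abs_nonneg _) (hε x hx) 2
  rw [intervalIntegral.integral_const, smul_eq_mul] at i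
  calc _ ≤ (-(1 / (2 * Real.pi))) ^ 2 * (Real.pi * ((Real.pi - -Real.pi) * ε ^ 2)) := by gcongr; exact b.trans (by gcongr)
    _ = ε ^ 2 / 2 := by field_simp; ring
    _ ≤ ε ^ 2 := by linarith [sq_nonneg ε]

lemma coef_sub (g₁ g₂ : ℝ → ℝ) (h₁ : Continuous g₁) (h₂ : Continuous g₂) (k : ℕ) :
    cosFourierCoef (fun x => g₁ x - g₂ x) k = cosFourierCoef g₁ k - cosFourierCoef g₂ k := by
  unfold cosFourierCoef
  rw [← mul_sub, ← intervalIntegral.integral_sub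
    ((by fun_prop : Continuous _).intervalIntegrable _ _)
    ((by fun_prop : Continuous _).intervalIntegrable _ _)]
  simp only [sub_mul]

lemma quant (a b c e : ℕ → ℝ) (h : IsMARecR a c) (h' : IsMARecR b e) (H ε : ℝ) (hH : 0 ≤ H)
    (hε : 0 ≤ ε) (hε1 : ε ≤ 1)
    (ha : ∀ N : ℕ, ∑ k ∈ Finset.range N, (((k : ℝ) + 1) * a (k + 1)) ^ 2 ≤ H ^ 2)
    (hd : ∀ N : ℕ, ∑ k ∈ Finset.range N, (((k : ℝ) + 1) * (b (k + 1) - a (k + 1))) ^ 2 ≤ ε ^ 2)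
    (N : ℕ) :
    ∑ k ∈ Finset.range N, |e k - c k| ≤ 2 * Real.exp (2 * H + 2) * Real.exp (2 * H) * ε ∧
    ∑ k ∈ Finset.range N, (k : ℝ) ^ 2 * (e k - c k) ^ 2 ≤
      2 * (Real.exp (2 * H + 2) ^ 2 +
        H ^ 2 * (2 * Real.exp (2 * H + 2) * Real.exp (2 * H)) ^ 2) * ε ^ 2 := by
  have a1 := l1_of_l2 (fun k => a (k + 1)) N H hH (ha N)
  have d1 := l1_of_l2 (fun k => b (k + 1) - a (k + 1)) N ε hε (hd N)
  have b1 : ∑ k ∈ Finset.range N, |b (k + 1)| ≤ 2 * H + 2 := by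
    have : ∑ k ∈ Finset.range N, |b (k + 1)| ≤ ∑ k ∈ Finset.range N, |b (k + 1) - a (k + 1)| +
        ∑ k ∈ Finset.range N, |a (k + 1)| := by
      rw [← Finset.sum_add_distrib]
      refine Finset.sum_le_sum fun k _ => ?_
      have := abs_add_le (b (k + 1) - a (k + 1)) (a (k + 1))
      simpa using this
    linarith
  have e1 : ∑ k ∈ Finset.range N, |e k| ≤ Real.exp (2 * H + 2) :=
    (ma_l1 h' N).trans (Real.exp_le_exp.mpr b1)
  have e0 : 0 ≤ ∑ k ∈ Finset.range N, |e k| := Finset.sum_nonneg fun _ _ => abs_nonneg _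
  have x0 : 0 ≤ ∑ k ∈ Finset.range N, |e k - c k| := Finset.sum_nonneg fun _ _ => abs_nonneg _
  have x1 : ∑ k ∈ Finset.range N, |e k - c k| ≤
      2 * Real.exp (2 * H + 2) * Real.exp (2 * H) * ε := by
    refine (ma_diff_l1 h h' N).trans ?_
    calc _ ≤ (2 * ε * Real.exp (2 * H + 2)) * Real.exp (2 * H) := by gcongr
      _ = _ := by ring
  refine ⟨x1, (ma_diff_l2 h h' N).trans ?_⟩
  calc _ ≤ 2 * (ε ^ 2 * Real.exp (2 * H + 2) ^ 2 +
        H ^ 2 * (2 * Real.exp (2 * H + 2) * Real.exp (2 * H) * ε) ^ 2) := by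
        gcongr
        · exact hd N
        · exact ha N
    _ = _ := by ring

lemma tsum_tendsto (u : ℕ → ℕ → ℝ) (hu : ∀ n k, 0 ≤ u n k)
    (h : ∀ δ > 0, ∀ᶠ n in atTop, ∀ N : ℕ, ∑ k ∈ Finset.range N, u n k ≤ δ) :
    Tendsto (fun n => ∑' k : ℕ, ENNReal.ofReal (u n k)) atTop (𝓝 0) := by
  rw [ENNReal.tendsto_nhds_zero]
  intro δ hδ
  obtain ⟨δ', hδ', hle⟩ : ∃ δ' : ℝ, 0 < δ' ∧ ENNReal.ofReal δ' ≤ δ := by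
    by_cases ht : δ = ⊤
    · exact ⟨1, one_pos, by simp [ht]⟩
    · exact ⟨δ.toReal, ENNReal.toReal_pos hδ.ne' ht, by rw [ENNReal.ofReal_toReal ht]⟩
  filter_upwards [h δ' hδ'] with n hn
  refine ENNReal.tsum_le_of_sum_range_le fun N => ?_
  rw [← ENNReal.ofReal_sum_of_nonneg fun k _ => hu n k]
  exact (ENNReal.ofReal_le_ofReal (hn N)).trans hle

/-- If `f` is 2π-periodic, even, `C¹` with `0 < m ≤ f ≤ M`, the `f_n` are 2π-periodic, even,
`C¹` with `0 < C₁ ≤ f_n ≤ C₂`, both `f_n → f` and `f_n' → f'` uniformly on `[-π, π]`, and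
`(c_k)`, `(ĉ_{k,n})` are obtained by the MA recursion from the Fourier coefficients of
`log f` and `log f_n`, then `∑_{k=0}^∞ k² (ĉ_{k,n} - c_k)² → 0` and
`∑_{k=0}^∞ |ĉ_{k,n} - c_k| → 0`. -/
theorem statement10 (f : ℝ → ℝ) (fn : ℕ → ℝ → ℝ) (m M C₁ C₂ : ℝ)
    (hm : 0 < m) (hbound : ∀ x, m ≤ f x ∧ f x ≤ M)
    (hC₁ : 0 < C₁) (hC₁₂ : C₁ < C₂)
    (hnbound : ∀ n x, C₁ ≤ fn n x ∧ fn n x ≤ C₂)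
    (hf_per : Function.Periodic f (2 * Real.pi))
    (hfn_per : ∀ n, Function.Periodic (fn n) (2 * Real.pi))
    (hf_even : ∀ x, f (-x) = f x) (hfn_even : ∀ n x, fn n (-x) = fn n x)
    (hf_smooth : ContDiff ℝ 1 f) (hfn_smooth : ∀ n, ContDiff ℝ 1 (fn n))
    (hunif : TendstoUniformlyOn fn f atTop (Set.Icc (-Real.pi) Real.pi))
    (hunif' : TendstoUniformlyOn (fun n => deriv (fn n)) (deriv f) atTop
      (Set.Icc (-Real.pi) Real.pi))
    (c : ℕ → ℝ) (chat : ℕ → ℕ → ℝ)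
    (hc : IsMARecR (fun k => cosFourierCoef (fun x => Real.log (f x)) k) c)
    (hchat : ∀ n, IsMARecR (fun k => cosFourierCoef (fun x => Real.log (fn n x)) k) (chat n)) :
    Tendsto (fun n => ∑' k : ℕ, ENNReal.ofReal ((k : ℝ) ^ 2 * (chat n k - c k) ^ 2))
      atTop (𝓝 0) ∧
    Tendsto (fun n => ∑' k : ℕ, ENNReal.ofReal |chat n k - c k|) atTop (𝓝 0) := by
  have hpi := Real.pi_pos
  have fpos : ∀ x, 0 < f x := fun x => hm.trans_le (hbound x).1
  have fnpos : ∀ n x, 0 < fn n x := fun n x => hC₁.trans_le (hnbound n x).1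
  have dlog : ∀ g : ℝ → ℝ, ContDiff ℝ 1 g → (∀ x, 0 < g x) →
      ∀ x, HasDerivAt (fun x => Real.log (g x)) (deriv g x / g x) x := fun g hg hpos x =>
    ((hg.differentiable (by norm_num)) x).hasDerivAt.log (hpos x).ne'
  have clog : ∀ g : ℝ → ℝ, ContDiff ℝ 1 g → (∀ x, 0 < g x) →
      Continuous (fun x => Real.log (g x)) := fun g hg hpos =>
    hg.continuous.log fun x => (hpos x).ne'
  have cder : ∀ g : ℝ → ℝ, ContDiff ℝ 1 g → (∀ x, 0 < g x) →
      Continuous (fun x => deriv g x / g x) := fun g hg hpos =>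
    (hg.continuous_deriv (by norm_num)).div hg.continuous fun x => (hpos x).ne'
  obtain ⟨H, hH⟩ := isCompact_Icc.exists_bound_of_continuousOn
    (s := Set.Icc (-Real.pi) Real.pi) (cder f hf_smooth fpos).continuousOn
  obtain ⟨B, hB⟩ := isCompact_Icc.exists_bound_of_continuousOn
    (s := Set.Icc (-Real.pi) Real.pi) (hf_smooth.continuous_deriv (by norm_num)).continuousOn
  have h0 : (0 : ℝ) ∈ Set.Icc (-Real.pi) Real.pi := ⟨by linarith, hpi.le⟩
  have hH0 : 0 ≤ H := (norm_nonneg _).trans (hH 0 h0)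
  have hB0 : 0 ≤ B := (norm_nonneg _).trans (hB 0 h0)
  have hM : 0 < M := (fpos 0).trans_le (hbound 0).2
  have ha := coef_l2 _ _ (dlog f hf_smooth fpos) (cder f hf_smooth fpos) H hH
  -- uniform smallness of the logarithmic derivatives
  have small : ∀ ε > 0, ∀ᶠ n in atTop, ∀ x ∈ Set.Icc (-Real.pi) Real.pi,
      |deriv (fn n) x / fn n x - deriv f x / f x| ≤ ε := by
    intro ε hε
    rw [Metric.tendstoUniformlyOn_iff] at hunif hunif'
    have hη : 0 < ε * (m * C₁) / (M + B) := by positivity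
    filter_upwards [hunif _ hη, hunif' _ hη] with n h1 h2 x hx
    have h1 := (h1 x hx).le
    have h2 := (h2 x hx).le
    have hBx := hB x hx
    rw [Real.dist_eq] at h1 h2
    rw [Real.norm_eq_abs] at hBx
    have hf1 := (hbound x).1
    have hf2 := (hbound x).2
    have hf3 := (hnbound n x).1
    have p1 := fpos x
    have p2 := fnpos n x
    rw [div_sub_div _ _ p2.ne' p1.ne', abs_div, abs_of_pos (mul_pos p2 p1),
      div_le_iff₀ (mul_pos p2 p1)]
    have e : deriv (fn n) x * f x - fn n x * deriv f x =
        -((deriv f x - deriv (fn n) x) * f x) + deriv f x * (f x - fn n x) := by ring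
    rw [e]
    refine (abs_add_le _ _).trans ?_
    rw [abs_neg, abs_mul, abs_mul, abs_of_pos p1]
    calc _ ≤ ε * (m * C₁) / (M + B) * M + B * (ε * (m * C₁) / (M + B)) := by gcongr
      _ = ε * (C₁ * m) := by field_simp
      _ ≤ ε * (fn n x * f x) := by gcongr
  have main : ∀ ε > 0, ε ≤ 1 → ∀ᶠ n in atTop, ∀ N : ℕ,
      ∑ k ∈ Finset.range N, |chat n k - c k| ≤
        2 * Real.exp (2 * H + 2) * Real.exp (2 * H) * ε ∧
      ∑ k ∈ Finset.range N, (k : ℝ) ^ 2 * (chat n k - c k) ^ 2 ≤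
      2 * (Real.exp (2 * H + 2) ^ 2 +
        H ^ 2 * (2 * Real.exp (2 * H + 2) * Real.exp (2 * H)) ^ 2) * ε ^ 2 := by
    intro ε hε hε1
    filter_upwards [small ε hε] with n hn
    refine quant _ _ c (chat n) hc (hchat n) H ε hH0 hε.le hε1 ha ?_
    have := coef_l2 (fun x => Real.log (fn n x) - Real.log (f x)) _
      (fun x => (dlog (fn n) (hfn_smooth n) (fnpos n) x).sub (dlog f hf_smooth fpos x))
      ((cder (fn n) (hfn_smooth n) (fnpos n)).sub (cder f hf_smooth fpos)) ε hn
    simpa only [coef_sub _ _ (clog (fn n) (hfn_smooth n) (fnpos n)) (clog f hf_smooth fpos)]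
      using this
  constructor
  · refine tsum_tendsto _ (fun n k => by positivity) fun δ hδ => ?_
    set K := 2 * (Real.exp (2 * H + 2) ^ 2 +
        H ^ 2 * (2 * Real.exp (2 * H + 2) * Real.exp (2 * H)) ^ 2) with hK
    have hKpos : 0 < K := by positivity
    have hε : 0 < min 1 (δ / K) := lt_min one_pos (by positivity)
    filter_upwards [main _ hε (min_le_left _ _)] with n hn N
    refine (hn N).2.trans ?_
    have h1 : min 1 (δ / K) ^ 2 ≤ δ / K := by
      rw [sq]
      calc _ ≤ 1 * (δ / K) := mul_le_mul (min_le_left _ _) (min_le_right _ _) hε.le zero_le_one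
        _ = _ := one_mul _
    calc _ ≤ K * (δ / K) := by gcongr
      _ = δ := by field_simp
  · refine tsum_tendsto _ (fun n k => abs_nonneg _) fun δ hδ => ?_
    set K := 2 * Real.exp (2 * H + 2) * Real.exp (2 * H) with hK
    have hKpos : 0 < K := by positivity
    have hε : 0 < min 1 (δ / K) := lt_min one_pos (by positivity)
    filter_upwards [main _ hε (min_le_left _ _)] with n hn N
    refine (hn N).1.trans ?_
    calc _ ≤ K * (δ / K) := by gcongr; exact min_le_right _ _
      _ = δ := by field_simp
end
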